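/- arXiv:2511.07120 — 3 statements merged into one kernel-verified Lean document; each statement's English description precedes it below -/
import Mathlib

section
/- Existence and basic properties of the regularizing Bessel-type kernel: Let d be a positive integer and t>0. There exists a function K:ℝ^d→ℝ such that (i) K is nonnegative, (ii) K is integrable with ∫_{ℝ^d}K(x)dx=1, (iii) K is bounded and continuous together with all its partial derivatives of order at most d, and (iv) the Fourier transform of K equals ξ ↦ (1+t²|ξ|²)^{−(d+2)}; in other words, K is a nonnegative probability density which is a fundamental solution of the differential operator (1−t²Δ)^{d+2} on ℝ^d. -/
/-! The kernel is a Gamma-weighted superposition of heat kernels,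
`K(x) = Γ(d+2)⁻¹ ∫₀^∞ s^{d+1} e^{-s} (4πt²s)^{-d/2} e^{-|x|²/(4t²s)} ds`,
so it is visibly nonnegative. By Fubini (`mix_ft`), the Fourier transform of a superposition of
Gaussians is the superposition of their Fourier transforms, here
`Γ(d+2)⁻¹ ∫₀^∞ s^{d+1} e^{-s(1+t²|ξ|²)} ds = (1+t²|ξ|²)^{-(d+2)}` (`mix_gamma`); its value at `0`
is the total mass `1`.

For smoothness, the same Fubini lemma applied to the multiplier, itself a superposition of
Gaussians in `ξ`, shows that `K` is the inverse Fourier integral of the multiplier, with no appeal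
to a general inversion theorem. Since `|ξ|^n (1+t²|ξ|²)^{-(d+2)}` is integrable for `n ≤ d`
(`multiplier_integrable`), one may differentiate `d` times under the integral sign, and each
derivative is bounded by an `L¹` norm (`smooth_of_fourier`). -/

open MeasureTheory

noncomputable section

/-- Points of `ℝ^d`. -/
abbrev Vd (d : ℕ) := Fin d → ℝ

/-- The Fourier transform with the convention `𝓕f(ξ) = ∫ f(x) e^{-i⟨x,ξ⟩} dx`. -/
def ft (d : ℕ) (f : Vd d → ℝ) (ξ : Vd d) : ℂ :=
  ∫ x : Vd d, Complex.exp (-Complex.I * (∑ i, (x i : ℂ) * (ξ i : ℂ))) * (f x : ℂ)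

/-! ### Fourier transform of a Gaussian -/

lemma gauss_integrand (d : ℕ) (a : ℝ) (x ξ : Vd d) :
    Complex.exp (-Complex.I * (∑ i, (x i : ℂ) * (ξ i : ℂ))) *
      ((Real.exp (-a * ∑ i, x i ^ 2) : ℝ) : ℂ) =
    Complex.exp (-(a : ℂ) * ∑ i, (x i : ℂ) ^ 2 + ∑ i, (-Complex.I * ξ i) * x i) := by
  rw [Complex.ofReal_exp, ← Complex.exp_add]
  congr 1
  push_cast
  rw [add_comm, Finset.mul_sum (a := -Complex.I)]
  congr 1
  exact Finset.sum_congr rfl fun i _ => by ring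

lemma gauss_integrable_cexp (d : ℕ) {a : ℝ} (ha : 0 < a) (ξ : Vd d) :
    Integrable fun x : Vd d =>
      Complex.exp (-Complex.I * (∑ i, (x i : ℂ) * (ξ i : ℂ))) *
        ((Real.exp (-a * ∑ i, x i ^ 2) : ℝ) : ℂ) := by
  simp_rw [gauss_integrand]
  exact GaussianFourier.integrable_cexp_neg_mul_sum_add (by simpa using ha) _

lemma gauss_ft (d : ℕ) {a : ℝ} (ha : 0 < a) (ξ : Vd d) :
    ft d (fun x => Real.exp (-a * ∑ i, x i ^ 2)) ξ =
      (((Real.pi / a) ^ ((d : ℝ) / 2) * Real.exp (-(∑ i, ξ i ^ 2) / (4 * a)) : ℝ) : ℂ) := by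
  unfold ft
  simp_rw [gauss_integrand]
  rw [GaussianFourier.integral_cexp_neg_mul_sum_add (by simpa using ha)]
  rw [Complex.ofReal_mul, Complex.ofReal_cpow (by positivity), Complex.ofReal_exp]
  simp [mul_pow]

lemma gauss_integral (d : ℕ) {a : ℝ} (ha : 0 < a) :
    ∫ x : Vd d, Real.exp (-a * ∑ i, x i ^ 2) = (Real.pi / a) ^ ((d : ℝ) / 2) := by
  have h := gauss_ft d ha 0
  simp only [ft, Pi.zero_apply, Complex.ofReal_zero, mul_zero, Finset.sum_const_zero,
    Complex.exp_zero, one_mul] at h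
  rw [integral_complex_ofReal] at h
  have := Complex.ofReal_injective h
  simpa using this

lemma norm_phase (d : ℕ) (x ξ : Vd d) :
    ‖Complex.exp (-Complex.I * (∑ i, (x i : ℂ) * (ξ i : ℂ)))‖ = 1 := by
  rw [Complex.norm_exp]
  have : (∑ i, (x i : ℂ) * (ξ i : ℂ)) = ((∑ i, x i * ξ i : ℝ) : ℂ) := by push_cast; rfl
  rw [this]
  simp

/-! ### Superpositions of Gaussians -/

/-- The function `x ↦ ∫₀^∞ w(s) exp(-a(s)|x|²) ds`, a superposition of centred Gaussians with
weight `w` and exponent `a`. -/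
def mix (d : ℕ) (w a : ℝ → ℝ) (x : Vd d) : ℝ :=
  ∫ s in Set.Ioi (0 : ℝ), w s * Real.exp (-a s * ∑ i, x i ^ 2)

lemma mix_integrable_prod {d : ℕ} {w a : ℝ → ℝ} (hw : Measurable w) (ha : Measurable a)
    (hw0 : ∀ s, 0 < s → 0 ≤ w s) (ha0 : ∀ s, 0 < s → 0 < a s)
    (hi : IntegrableOn (fun s => w s * (Real.pi / a s) ^ ((d : ℝ) / 2)) (Set.Ioi 0))
    (ξ : Vd d) :
    Integrable (fun p : Vd d × ℝ =>
      Complex.exp (-Complex.I * (∑ i, (p.1 i : ℂ) * (ξ i : ℂ))) *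
        ((w p.2 * Real.exp (-a p.2 * ∑ i, p.1 i ^ 2) : ℝ) : ℂ))
      (volume.prod (volume.restrict (Set.Ioi 0))) := by
  have hm : Measurable (fun p : Vd d × ℝ =>
      Complex.exp (-Complex.I * (∑ i, (p.1 i : ℂ) * (ξ i : ℂ))) *
        ((w p.2 * Real.exp (-a p.2 * ∑ i, p.1 i ^ 2) : ℝ) : ℂ)) := by
    fun_prop
  rw [integrable_prod_iff' hm.aestronglyMeasurable]
  constructor
  · filter_upwards [ae_restrict_mem measurableSet_Ioi] with s hs
    have := (gauss_integrable_cexp d (ha0 s hs) ξ).const_mul (w s : ℂ)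
    refine this.congr (Filter.Eventually.of_forall fun x => ?_)
    simp only [Complex.ofReal_mul]
    ring
  · refine hi.congr ?_
    filter_upwards [ae_restrict_mem measurableSet_Ioi] with s hs
    rw [← gauss_integral d (ha0 s hs), ← integral_const_mul]
    refine integral_congr_ae (Filter.Eventually.of_forall fun x => ?_)
    simp only [norm_mul, norm_phase, one_mul, Complex.norm_real]
    rw [Real.norm_of_nonneg (hw0 s hs), Real.norm_of_nonneg (Real.exp_nonneg _)]

lemma mix_integrable {d : ℕ} {w a : ℝ → ℝ} (hw : Measurable w) (ha : Measurable a)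
    (hw0 : ∀ s, 0 < s → 0 ≤ w s) (ha0 : ∀ s, 0 < s → 0 < a s)
    (hi : IntegrableOn (fun s => w s * (Real.pi / a s) ^ ((d : ℝ) / 2)) (Set.Ioi 0)) :
    Integrable (mix d w a) := by
  have h := (mix_integrable_prod hw ha hw0 ha0 hi 0).integral_prod_left.re
  refine h.congr (Filter.Eventually.of_forall fun x => ?_)
  simp only [Pi.zero_apply, Complex.ofReal_zero, mul_zero, Finset.sum_const_zero,
    Complex.exp_zero, one_mul]
  rw [integral_complex_ofReal]
  simp [mix]

/-- Fubini: the Fourier transform of a superposition of Gaussians is the superposition of their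
Fourier transforms. -/
lemma mix_ft {d : ℕ} {w a : ℝ → ℝ} (hw : Measurable w) (ha : Measurable a)
    (hw0 : ∀ s, 0 < s → 0 ≤ w s) (ha0 : ∀ s, 0 < s → 0 < a s)
    (hi : IntegrableOn (fun s => w s * (Real.pi / a s) ^ ((d : ℝ) / 2)) (Set.Ioi 0))
    (ξ : Vd d) : ft d (mix d w a) ξ =
    ((mix d (fun s => w s * (Real.pi / a s) ^ ((d : ℝ) / 2)) (fun s => (4 * a s)⁻¹) ξ : ℝ) : ℂ) := by
  have h := integral_integral_swap (f := fun (x : Vd d) (s : ℝ) =>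
      Complex.exp (-Complex.I * (∑ i, (x i : ℂ) * (ξ i : ℂ))) *
        ((w s * Real.exp (-a s * ∑ i, x i ^ 2) : ℝ) : ℂ))
    (mix_integrable_prod hw ha hw0 ha0 hi ξ)
  calc ft d (mix d w a) ξ = _ := by
        unfold ft mix
        refine integral_congr_ae (Filter.Eventually.of_forall fun x => ?_)
        simp only
        rw [← integral_complex_ofReal, ← integral_const_mul]
    _ = _ := h
    _ = _ := by
        unfold mix
        rw [← integral_complex_ofReal]
        refine setIntegral_congr_fun measurableSet_Ioi fun s hs => ?_
        have := gauss_ft d (ha0 s hs) ξ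
        simp only
        rw [mul_assoc, Complex.ofReal_mul (w s)]
        rw [show -(4 * a s)⁻¹ * ∑ i, ξ i ^ 2 = -(∑ i, ξ i ^ 2) / (4 * a s) by ring, ← this]
        unfold ft
        rw [← integral_const_mul]
        refine integral_congr_ae (Filter.Eventually.of_forall fun x => ?_)
        simp only [Complex.ofReal_mul]
        ring

lemma mix_congr {d : ℕ} {w w' a a' : ℝ → ℝ} (hw : ∀ s, 0 < s → w s = w' s)
    (ha : ∀ s, 0 < s → a s = a' s) (x : Vd d) : mix d w a x = mix d w' a' x :=
  setIntegral_congr_fun measurableSet_Ioi fun s hs => by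
    simp only [hw s hs, ha s hs]

/-! ### The Bessel multiplier -/

/-- Up to the factor `Γ(d+2)`, the multiplier `(1+t²|ξ|²)^{-(d+2)}` is a superposition of Gaussians, by Euler's
integral for the Gamma function. -/
lemma mix_gamma (d : ℕ) (t : ℝ) (ξ : Vd d) :
    mix d (fun s => s ^ ((d : ℝ) + 1) * Real.exp (-s)) (fun s => t ^ 2 * s) ξ =
      Real.Gamma ((d : ℝ) + 2) * ((1 + t ^ 2 * ∑ i, ξ i ^ 2) ^ (d + 2))⁻¹ := by
  have hr : 0 < 1 + t ^ 2 * ∑ i, ξ i ^ 2 := by positivity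
  have h := Real.integral_rpow_mul_exp_neg_mul_Ioi (a := (d : ℝ) + 2) (by positivity) hr
  rw [Real.div_rpow zero_le_one hr.le, Real.one_rpow, one_div,
    show ((d : ℝ) + 2) = ((d + 2 : ℕ) : ℝ) by push_cast; rfl, Real.rpow_natCast,
    mul_comm _ (Real.Gamma _)] at h
  rw [show ((d : ℝ) + 2) = ((d + 2 : ℕ) : ℝ) by push_cast; rfl, ← h]
  unfold mix
  refine setIntegral_congr_fun measurableSet_Ioi fun s _ => ?_
  simp only
  rw [mul_assoc, ← Real.exp_add]
  congr 2
  · push_cast; ring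
  · ring

/-- Polynomially weighted integrability of the multiplier up to order `d`, from
`2(d+2) - d > d`. -/
lemma multiplier_integrable (d : ℕ) (t : ℝ) (ht : 0 < t) (n : ℕ) (hn : n ≤ d) :
    Integrable fun ξ : Vd d => ‖ξ‖ ^ n * ‖(((1 + t ^ 2 * ∑ i, ξ i ^ 2) ^ (d + 2) : ℝ) : ℂ)⁻¹‖ := by
  set c : ℝ := min 1 (t ^ 2) / 2 with hc
  have hc0 : 0 < c := by positivity
  have hI : Integrable fun ξ : Vd d => (c ^ (d + 2))⁻¹ * (1 + ‖ξ‖) ^ (-((d : ℝ) + 4)) :=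
    (integrable_one_add_norm (by simp)).const_mul _
  refine hI.mono' ?_ (Filter.Eventually.of_forall fun ξ => ?_)
  · refine Continuous.aestronglyMeasurable ?_
    refine (continuous_norm.pow n).mul (Continuous.norm (Continuous.inv₀ (by fun_prop) fun ξ => ?_))
    rw [Complex.ofReal_ne_zero]
    positivity
  · have hle : ‖ξ‖ ^ 2 ≤ ∑ i, ξ i ^ 2 := by
      have hs : 0 ≤ ∑ i, ξ i ^ 2 := by positivity
      have : ‖ξ‖ ≤ √(∑ i, ξ i ^ 2) := by
        refine (pi_norm_le_iff_of_nonneg (Real.sqrt_nonneg _)).2 fun i => ?_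
        rw [Real.norm_eq_abs]
        refine Real.abs_le_sqrt ?_
        exact Finset.single_le_sum (f := fun i => ξ i ^ 2) (fun i _ => sq_nonneg _)
          (Finset.mem_univ i)
      calc ‖ξ‖ ^ 2 ≤ √(∑ i, ξ i ^ 2) ^ 2 := by gcongr
        _ = _ := Real.sq_sqrt hs
    have hn0 := norm_nonneg ξ
    have h1 : min 1 (t ^ 2) ≤ 1 := min_le_left _ _
    have h2 : min 1 (t ^ 2) ≤ t ^ 2 := min_le_right _ _
    have hb : c * (1 + ‖ξ‖) ^ 2 ≤ 1 + t ^ 2 * ∑ i, ξ i ^ 2 := by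
      have h3 : min 1 (t ^ 2) * ‖ξ‖ ^ 2 ≤ t ^ 2 * ∑ i, ξ i ^ 2 := by gcongr
      have h4 : (1 + ‖ξ‖) ^ 2 ≤ 2 * (1 + ‖ξ‖ ^ 2) := by nlinarith [sq_nonneg (1 - ‖ξ‖)]
      have h5 := mul_le_mul_of_nonneg_left h4 hc0.le
      rw [hc] at h5 ⊢
      linarith
    rw [norm_mul, norm_norm, norm_pow, norm_norm, norm_inv, Complex.norm_real,
      Real.norm_of_nonneg (by positivity)]
    calc ‖ξ‖ ^ n * ((1 + t ^ 2 * ∑ i, ξ i ^ 2) ^ (d + 2))⁻¹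
        ≤ (1 + ‖ξ‖) ^ d * ((c * (1 + ‖ξ‖) ^ 2) ^ (d + 2))⁻¹ := by
          gcongr
          calc ‖ξ‖ ^ n ≤ (1 + ‖ξ‖) ^ n := by gcongr; linarith
            _ ≤ _ := by gcongr; linarith
      _ = _ := by
          rw [Real.rpow_neg (by positivity), show (d : ℝ) + 4 = ((d + 4 : ℕ) : ℝ) by push_cast; rfl,
            Real.rpow_natCast]
          have : (1 + ‖ξ‖) ≠ 0 := by positivity
          rw [mul_pow, ← pow_mul]
          field_simp
          ring

/-! ### Smoothness of Fourier integrals -/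

/-- The pairing `(x, ξ) ↦ ⟨x, ξ⟩ / 2π`, which turns Mathlib's character `e^{-2πi L(x, ξ)}` into
`e^{-i⟨x, ξ⟩}`. -/
def pairing (d : ℕ) : Vd d →L[ℝ] Vd d →L[ℝ] ℝ :=
  (2 * Real.pi)⁻¹ • ∑ i, (ContinuousLinearMap.proj (R := ℝ) (φ := fun _ : Fin d => ℝ) i).smulRight
    (ContinuousLinearMap.proj (R := ℝ) (φ := fun _ : Fin d => ℝ) i)

lemma pairing_fourier (d : ℕ) (f : Vd d → ℂ) (x : Vd d) :
    VectorFourier.fourierIntegral Real.fourierChar volume (pairing d).toLinearMap₁₂ f x =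
      ∫ ξ : Vd d, Complex.exp (-Complex.I * (∑ i, (ξ i : ℂ) * (x i : ℂ))) * f ξ := by
  unfold VectorFourier.fourierIntegral
  refine integral_congr_ae (Filter.Eventually.of_forall fun ξ => ?_)
  have hL : (pairing d).toLinearMap₁₂ ξ x = (2 * Real.pi)⁻¹ * ∑ i, ξ i * x i := by
    simp [pairing]
  simp only [hL, Circle.smul_def, Real.fourierChar_apply, smul_eq_mul]
  congr 2
  have : (Real.pi : ℂ) ≠ 0 := by exact_mod_cast Real.pi_ne_zero
  push_cast
  field_simp

/-- A real function whose complexification is the Fourier integral of an `f` with `|ξ|^n f`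
integrable for `n ≤ N` is `C^N` with bounded derivatives. -/
lemma smooth_of_fourier {d N : ℕ} {f : Vd d → ℂ} (hm : AEStronglyMeasurable f)
    (hf : ∀ n : ℕ, n ≤ N → Integrable fun ξ => ‖ξ‖ ^ n * ‖f ξ‖) {K : Vd d → ℝ}
    (hK : ∀ x, (K x : ℂ) =
      ∫ ξ : Vd d, Complex.exp (-Complex.I * (∑ i, (ξ i : ℂ) * (x i : ℂ))) * f ξ) :
    ContDiff ℝ (N : ℕ∞) K ∧
      ∀ n : ℕ, n ≤ N → ∃ C : ℝ, ∀ x, ‖iteratedFDeriv ℝ n K x‖ ≤ C := by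
  set F := VectorFourier.fourierIntegral Real.fourierChar volume (pairing d).toLinearMap₁₂ f with hF
  have hf' : ∀ n : ℕ, (n : ℕ∞) ≤ (N : ℕ∞) → Integrable fun ξ => ‖ξ‖ ^ n * ‖f ξ‖ :=
    fun n hn => hf n (by exact_mod_cast hn)
  have hFs : ContDiff ℝ (N : ℕ∞) F := VectorFourier.contDiff_fourierIntegral (pairing d) hf'
  have hKF : K = Complex.reCLM ∘ F := by
    funext x
    rw [Function.comp_apply, hF, pairing_fourier, ← hK, Complex.reCLM_apply, Complex.ofReal_re]
  refine ⟨hKF ▸ Complex.reCLM.contDiff.comp hFs, fun n hn => ?_⟩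
  have hn' : (n : ℕ∞) ≤ (N : ℕ∞) := by exact_mod_cast hn
  refine ⟨‖Complex.reCLM‖ *
    ∫ ξ, ‖VectorFourier.fourierPowSMulRight (pairing d) f ξ n‖, fun x => ?_⟩
  rw [hKF, Complex.reCLM.iteratedFDeriv_comp_left hFs.contDiffAt (by exact_mod_cast hn)]
  refine (ContinuousLinearMap.norm_compContinuousMultilinearMap_le _ _).trans ?_
  gcongr
  rw [hF, VectorFourier.iteratedFDeriv_fourierIntegral (pairing d) hf' hm hn']
  exact VectorFourier.norm_fourierIntegral_le_integral_norm _ _ _ _ _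

/-! ### The kernel -/

/-- Existence and basic properties of the regularizing Bessel-type kernel:
there is a nonnegative probability density `K` on `ℝ^d`, bounded and continuous together
with all its partial derivatives of order at most `d`, whose Fourier transform is
`ξ ↦ (1 + t²|ξ|²)^{-(d+2)}`; i.e. `K` is a fundamental solution of `(1 - t²Δ)^{d+2}`. -/
theorem stmt8 (d : ℕ) (hd : 0 < d) (t : ℝ) (ht : 0 < t) :
    ∃ K : Vd d → ℝ,
      (∀ x, 0 ≤ K x) ∧
      Integrable K ∧ (∫ x, K x) = 1 ∧
      (ContDiff ℝ (d : ℕ∞) K ∧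
        ∀ n : ℕ, n ≤ d → ∃ C : ℝ, ∀ x, ‖iteratedFDeriv ℝ n K x‖ ≤ C) ∧
      (∀ ξ : Vd d,
        ft d K ξ = (((1 + t ^ 2 * ∑ i, ξ i ^ 2) ^ (d + 2) : ℝ) : ℂ)⁻¹) := by
  set G := Real.Gamma ((d : ℝ) + 2) with hG
  have hG0 : 0 < G := Real.Gamma_pos_of_pos (by positivity)
  have hpi := Real.pi_pos
  -- `w` and `a` describe the heat kernels `e^{-|x|²/(4t²s)} / (4πt²s)^{d/2}` with a Gamma weight;
  -- `v` and `b` describe their Fourier transforms up to the factor `Γ(d+2)`.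
  set v : ℝ → ℝ := fun s => s ^ ((d : ℝ) + 1) * Real.exp (-s) with hv
  set b : ℝ → ℝ := fun s => t ^ 2 * s with hb
  set w : ℝ → ℝ := fun s => G⁻¹ * v s * ((4 * Real.pi * (t ^ 2 * s)) ^ ((d : ℝ) / 2))⁻¹ with hw
  set a : ℝ → ℝ := fun s => (4 * (t ^ 2 * s))⁻¹ with ha
  have hvm : Measurable v := by fun_prop
  have hbm : Measurable b := by fun_prop
  have hwm : Measurable w := by fun_prop
  have ham : Measurable a := by fun_prop
  have hv0 : ∀ s, 0 < s → 0 ≤ v s := fun s hs => by positivity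
  have hb0 : ∀ s, 0 < s → 0 < b s := fun s hs => by positivity
  have hw0 : ∀ s, 0 < s → 0 ≤ w s := fun s hs => by
    have := hv0 s hs
    positivity
  have ha0 : ∀ s, 0 < s → 0 < a s := fun s hs => by positivity
  have hwa : ∀ s, 0 < s → w s * (Real.pi / a s) ^ ((d : ℝ) / 2) = G⁻¹ * v s := fun s hs => by
    have h1 : Real.pi / a s = 4 * Real.pi * (t ^ 2 * s) := by
      simp only [ha]
      field_simp
    rw [h1]
    exact inv_mul_cancel_right₀ (by positivity) _
  have hvb : ∀ s, 0 < s → v s * (Real.pi / b s) ^ ((d : ℝ) / 2) =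
      G * (2 * Real.pi) ^ d * w s := fun s hs => by
    have h1 : Real.pi / b s = (2 * Real.pi) ^ 2 / (4 * Real.pi * (t ^ 2 * s)) := by
      simp only [hb]
      field_simp
      ring
    have h2 : ((2 * Real.pi) ^ 2) ^ ((d : ℝ) / 2) = (2 * Real.pi) ^ d := by
      rw [← Real.rpow_natCast _ 2, ← Real.rpow_mul (by positivity), ← Real.rpow_natCast]
      congr 1
      push_cast
      ring
    rw [h1, Real.div_rpow (by positivity) (by positivity), h2]
    simp only [hw]
    field_simp
  have hvi : IntegrableOn (fun s => G⁻¹ * v s) (Set.Ioi 0) := by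
    have := (Real.GammaIntegral_convergent (s := (d : ℝ) + 2) (by positivity)).const_mul G⁻¹
    refine this.congr (Filter.Eventually.of_forall fun s => ?_)
    simp only [hv]
    rw [show (d : ℝ) + 2 - 1 = d + 1 by ring]
    ring
  have hwi : IntegrableOn (fun s => w s * (Real.pi / a s) ^ ((d : ℝ) / 2)) (Set.Ioi 0) :=
    hvi.congr_fun (fun s hs => (hwa s hs).symm) measurableSet_Ioi
  have hvbi : IntegrableOn (fun s => v s * (Real.pi / b s) ^ ((d : ℝ) / 2)) (Set.Ioi 0) := by
    have h0 : (0 : ℝ) < (d : ℝ) / 2 + 2 := by positivity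
    have := (Real.GammaIntegral_convergent h0).const_mul ((Real.pi / t ^ 2) ^ ((d : ℝ) / 2))
    refine IntegrableOn.congr_fun this (fun s hs => ?_) measurableSet_Ioi
    have hs' : (0 : ℝ) < s := hs
    simp only [hv, hb]
    rw [show Real.pi / (t ^ 2 * s) = Real.pi / t ^ 2 / s by field_simp,
      Real.div_rpow (x := Real.pi / t ^ 2) (by positivity) hs'.le,
      show (d : ℝ) + 1 = ((d : ℝ) / 2 + 2 - 1) + (d : ℝ) / 2 by ring, Real.rpow_add hs']
    field_simp
  have hft : ∀ ξ : Vd d, ft d (mix d w a) ξ =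
      (((1 + t ^ 2 * ∑ i, ξ i ^ 2) ^ (d + 2) : ℝ) : ℂ)⁻¹ := fun ξ => by
    rw [mix_ft hwm ham hw0 ha0 hwi ξ,
      mix_congr (w' := fun s => G⁻¹ * v s) (a' := b) hwa (fun s hs => by
        simp only [ha, hb]
        field_simp) ξ]
    have h1 : mix d (fun s => G⁻¹ * v s) b ξ = G⁻¹ * mix d v b ξ := by
      unfold mix
      simp_rw [mul_assoc]
      rw [← integral_const_mul]
    rw [h1, mix_gamma d t ξ, ← hG, inv_mul_cancel_left₀ hG0.ne', Complex.ofReal_inv]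
  have hint : Integrable (mix d w a) := mix_integrable hwm ham hw0 ha0 hwi
  -- Fourier inversion for this kernel, again by exchanging the integrals.
  have hinv : ∀ x : Vd d, ((mix d w a x : ℝ) : ℂ) =
      ∫ ξ : Vd d, Complex.exp (-Complex.I * (∑ i, (ξ i : ℂ) * (x i : ℂ))) *
        ((((2 * Real.pi) ^ d : ℝ) : ℂ)⁻¹ *
          (((1 + t ^ 2 * ∑ i, ξ i ^ 2) ^ (d + 2) : ℝ) : ℂ)⁻¹) := fun x => by
    have h := mix_ft hvm hbm hv0 hb0 hvbi x
    rw [mix_congr (w' := fun s => G * (2 * Real.pi) ^ d * w s) (a' := a) hvb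
      (fun s _ => rfl) x] at h
    have h1 : mix d (fun s => G * (2 * Real.pi) ^ d * w s) a x =
        G * (2 * Real.pi) ^ d * mix d w a x := by
      unfold mix
      simp_rw [mul_assoc (G * (2 * Real.pi) ^ d)]
      rw [← integral_const_mul]
    rw [h1] at h
    have hne : ((G * (2 * Real.pi) ^ d : ℝ) : ℂ) ≠ 0 := by
      rw [Complex.ofReal_ne_zero]
      positivity
    rw [Complex.ofReal_mul] at h
    have hGc : (G : ℂ) ≠ 0 := by exact_mod_cast hG0.ne'
    rw [← mul_right_inj' hne, ← h]
    unfold ft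
    rw [← integral_const_mul]
    refine integral_congr_ae (Filter.Eventually.of_forall fun ξ => ?_)
    simp only
    rw [mix_gamma d t ξ, ← hG]
    have hp : (((2 * Real.pi) ^ d : ℝ) : ℂ) ≠ 0 := by
      rw [Complex.ofReal_ne_zero]
      positivity
    rw [Complex.ofReal_mul, Complex.ofReal_mul, Complex.ofReal_inv]
    field_simp
  refine ⟨mix d w a, fun x => ?_, hint, ?_, ?_, hft⟩
  · exact setIntegral_nonneg measurableSet_Ioi fun s hs =>
      mul_nonneg (hw0 s hs) (Real.exp_nonneg _)
  · have h := hft 0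
    simp only [ft, Pi.zero_apply, Complex.ofReal_zero, mul_zero, Finset.sum_const_zero,
      Complex.exp_zero, one_mul] at h
    rw [integral_complex_ofReal] at h
    exact Complex.ofReal_injective (h.trans (by simp))
  · refine smooth_of_fourier ?_ (fun n hn => ?_) hinv
    · refine (Continuous.mul continuous_const
        (Continuous.inv₀ (by fun_prop) fun ξ => ?_)).aestronglyMeasurable
      rw [Complex.ofReal_ne_zero]
      positivity
    · refine ((multiplier_integrable d t ht n hn).const_mul
        ‖(((2 * Real.pi) ^ d : ℝ) : ℂ)⁻¹‖).congr (Filter.Eventually.of_forall fun ξ => ?_)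
      simp only [norm_mul]
      ring
end
end

section
/- L¹ bounds on derivatives of the Bessel-type kernel: Let d be a positive integer and σ>0; for μ∈(0,1] write [μ]:=μ^{1/σ} and let K̃_μ be the fundamental solution of (1−[μ]²Δ)^{d+2} on ℝ^d, i.e. the nonnegative integrable function with ∫K̃_μ=1 whose Fourier transform equals ξ↦(1+[μ]²|ξ|²)^{−(d+2)}. Then for every multi-index a∈ℕ^d with |a|≤d there exists a constant C such that ∂^aK̃_μ exists, is integrable, and ‖∂^aK̃_μ‖_{L¹(ℝ^d)} ≤ C·[μ]^{−|a|} for all μ∈(0,1]. -/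
/-!
The Fourier multiplier is subordinated to Gaussians: with `B(ξ) = (1 + |ξ|²)^{-(d+2)}`,
`B(ξ) = const * ∫₀^∞ r^{2d+3} e^{-r²} e^{-r²|ξ|²} dr`, so the kernel at scale one is, up to a
constant, `G(x) = ∫₀^∞ r^{d+3} e^{-r²} φ(x / r) dr` with `φ(x) = e^{-|x|²/4}` (`ft_subord`).

For any Schwartz function `φ`, the superposition `∫₀^∞ rⁿ e^{-r²} φ(x / r) dr` (`subord n φ`) is
continuous and integrable for every `n ≥ 0`, and differentiating it replaces `φ` by a derivative
of `φ` and lowers `n` by one (`subord_hasFDerivAt`). Starting from `n = d + 3`, all derivatives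
`∂^a G` with `|a| ≤ d` are of the same form, so `G` is of class `C^d` and `∂^a G` is integrable
(`subord_contDiff`, `foldr_pd_subord`, `subord_integrable`).

For general `μ`, with `t = μ^{1/σ}`, the function `t^{-d} G(x / t)`, suitably normalized, is
nonnegative and has the Fourier transform of `K μ`, hence equals `K μ` almost everywhere by
uniqueness of characteristic functions (`ae_eq_of_ft_eq`). Scaling then gives
`‖∂^a K_μ‖₁ = t^{-|a|} ‖∂^a K_1‖₁`.
-/


open MeasureTheory

noncomputable section

/-- The family `μ ↦ K̃_μ` of fundamental solutions of `(1 - [μ]²Δ)^{d+2}`, `[μ] = μ^{1/σ}`. -/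
def IsBessel (d : ℕ) (σ : ℝ) (K : ℝ → Vd d → ℝ) : Prop :=
  ∀ μ ∈ Set.Ioc (0 : ℝ) 1,
    (∀ x, 0 ≤ K μ x) ∧ Integrable (K μ) ∧ (∫ x, K μ x) = 1 ∧
    ∀ ξ : Vd d,
      ft d (K μ) ξ
        = (((1 + (μ ^ (1 / σ)) ^ 2 * ∑ i, ξ i ^ 2) ^ (d + 2) : ℝ) : ℂ)⁻¹

/-- The partial derivative `∂_i`. -/
def pd (d : ℕ) (i : Fin d) (f : Vd d → ℝ) : Vd d → ℝ :=
  fun x => fderiv ℝ f x (Pi.single i 1)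

/-- The iterated partial derivative `∂^a` for a multi-index `a : Fin d → ℕ`. -/
def mderiv (d : ℕ) (a : Fin d → ℕ) (f : Vd d → ℝ) : Vd d → ℝ :=
  (List.finRange d).foldr (fun i g => (pd d i)^[a i] g) f

open Set Filter Topology SchwartzMap
open scoped ContDiff

/-! ### Superpositions of dilates of a Schwartz function -/

section Subordination

variable {E F : Type} [NormedAddCommGroup E] [NormedSpace ℝ E]
  [NormedAddCommGroup F] [NormedSpace ℝ F]

/-- The superposition `x ↦ ∫₀^∞ rⁿ e^{-r²} φ(x / r) dr` of dilates of a Schwartz function `φ`. -/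
def subord (n : ℕ) (φ : 𝓢(E, F)) (x : E) : F :=
  ∫ r in Ioi (0 : ℝ), (r ^ n * Real.exp (-r ^ 2)) • φ (r⁻¹ • x)

lemma weight_integrable (n : ℕ) :
    IntegrableOn (fun r : ℝ => r ^ n * Real.exp (-r ^ 2)) (Ioi 0) := by
  have h := integrableOn_rpow_mul_exp_neg_mul_sq (b := 1) one_pos (s := (n : ℝ))
    (by have : (0 : ℝ) ≤ n := n.cast_nonneg
        linarith)
  simpa using h

lemma weight_nonneg (n : ℕ) {r : ℝ} (hr : r ∈ Ioi (0 : ℝ)) : 0 ≤ r ^ n * Real.exp (-r ^ 2) :=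
  mul_nonneg (pow_nonneg (le_of_lt hr) _) (Real.exp_nonneg _)

lemma exists_bound (φ : 𝓢(E, F)) : ∃ C : ℝ, 0 ≤ C ∧ ∀ x, ‖φ x‖ ≤ C := by
  obtain ⟨C, hC, h⟩ := φ.decay 0 0
  exact ⟨C, hC.le, fun x => by simpa using h x⟩

lemma integrand_continuousOn (n : ℕ) (φ : 𝓢(E, F)) :
    ContinuousOn (fun p : ℝ × E => (p.1 ^ n * Real.exp (-p.1 ^ 2)) • φ (p.1⁻¹ • p.2))
      (Ioi (0 : ℝ) ×ˢ univ) := by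
  have hinv : ContinuousOn (fun p : ℝ × E => p.1⁻¹) (Ioi (0 : ℝ) ×ˢ univ) :=
    continuousOn_fst.inv₀ fun p hp => (ne_of_gt hp.1)
  refine ContinuousOn.smul (by fun_prop) ?_
  exact φ.continuous.comp_continuousOn (hinv.smul continuousOn_snd)

lemma integrand_aesm (n : ℕ) (φ : 𝓢(E, F)) (x : E) :
    AEStronglyMeasurable (fun r : ℝ => (r ^ n * Real.exp (-r ^ 2)) • φ (r⁻¹ • x))
      (volume.restrict (Ioi 0)) := by
  refine ContinuousOn.aestronglyMeasurable ?_ measurableSet_Ioi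
  exact (integrand_continuousOn n φ).comp (f := fun r : ℝ => (r, x)) (by fun_prop)
    (fun r hr => ⟨hr, mem_univ _⟩)

lemma integrand_integrable (n : ℕ) (φ : 𝓢(E, F)) (x : E) :
    IntegrableOn (fun r : ℝ => (r ^ n * Real.exp (-r ^ 2)) • φ (r⁻¹ • x)) (Ioi 0) := by
  obtain ⟨C, -, hC⟩ := exists_bound φ
  refine Integrable.mono' ((weight_integrable n).mul_const C) (integrand_aesm n φ x) ?_
  refine (ae_restrict_iff' measurableSet_Ioi).2 (ae_of_all _ fun r hr => ?_)
  rw [norm_smul, Real.norm_of_nonneg (weight_nonneg n hr)]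
  exact mul_le_mul_of_nonneg_left (hC _) (weight_nonneg n hr)

lemma subord_continuous (n : ℕ) (φ : 𝓢(E, F)) : Continuous (subord n φ) := by
  obtain ⟨C, -, hC⟩ := exists_bound φ
  refine continuous_of_dominated (bound := fun r : ℝ => r ^ n * Real.exp (-r ^ 2) * C)
    (integrand_aesm n φ) (fun x => ?_)
    ((weight_integrable n).mul_const C) (ae_of_all _ fun r => ?_)
  · refine (ae_restrict_iff' measurableSet_Ioi).2 (ae_of_all _ fun r hr => ?_)
    rw [norm_smul, Real.norm_of_nonneg (weight_nonneg n hr)]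
    exact mul_le_mul_of_nonneg_left (hC _) (weight_nonneg n hr)
  · exact (φ.continuous.comp (continuous_const_smul _)).const_smul _

/-- Each derivative costs a factor `1 / r` under the integral sign, that is, one power of the
weight. -/
lemma subord_hasFDerivAt (n : ℕ) (φ : 𝓢(E, F)) (x : E) :
    HasFDerivAt (subord (n + 1) φ) (subord n (fderivCLM ℝ E F φ) x) x := by
  obtain ⟨C, -, hC⟩ := exists_bound (fderivCLM ℝ E F φ)
  refine hasFDerivAt_integral_of_dominated_of_fderiv_le (𝕜 := ℝ) (s := univ)
    (bound := fun r : ℝ => r ^ n * Real.exp (-r ^ 2) * C)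
    (F' := fun x r => (r ^ n * Real.exp (-r ^ 2)) • fderivCLM ℝ E F φ (r⁻¹ • x)) univ_mem
    (Eventually.of_forall (integrand_aesm (n + 1) φ)) (integrand_integrable (n + 1) φ x)
    (integrand_aesm n _ x) ?_ ((weight_integrable n).mul_const C) ?_
  · refine (ae_restrict_iff' measurableSet_Ioi).2 (ae_of_all _ fun r hr y _ => ?_)
    rw [norm_smul, Real.norm_of_nonneg (weight_nonneg n hr)]
    exact mul_le_mul_of_nonneg_left (hC _) (weight_nonneg n hr)
  · refine (ae_restrict_iff' measurableSet_Ioi).2 (ae_of_all _ fun r hr y _ => ?_)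
    have hr0 : r ≠ 0 := ne_of_gt hr
    have h1 : HasFDerivAt (fun y : E => φ (r⁻¹ • y)) (r⁻¹ • fderiv ℝ φ (r⁻¹ • y)) y := by
      have := (φ.differentiableAt (x := r⁻¹ • y)).hasFDerivAt.comp y
        ((hasFDerivAt_id y).const_smul r⁻¹)
      refine this.congr_fderiv ?_
      ext v
      simp
    refine (h1.const_smul (r ^ (n + 1) * Real.exp (-r ^ 2))).congr_fderiv ?_
    rw [smul_smul, fderivCLM_apply]
    congr 1
    field_simp
    ring

lemma subord_contDiff (n : ℕ) : ∀ {F : Type} [NormedAddCommGroup F] [NormedSpace ℝ F]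
    (φ : 𝓢(E, F)), ContDiff ℝ n (subord n φ) := by
  induction n with
  | zero =>
    intro F _ _ φ
    simpa using (contDiff_zero (𝕜 := ℝ)).2 (subord_continuous (E := E) 0 φ)
  | succ n ih =>
    intro F _ _ φ
    rw [Nat.cast_succ, contDiff_succ_iff_fderiv]
    refine ⟨fun x => (subord_hasFDerivAt n φ x).differentiableAt, by simp, ?_⟩
    have : fderiv ℝ (subord (n + 1) φ) = subord n (fderivCLM ℝ E F φ) :=
      funext fun x => (subord_hasFDerivAt n φ x).fderiv
    rw [this]
    exact ih _

lemma fderiv_subord_apply (n : ℕ) (φ : 𝓢(E, F)) [CompleteSpace F] (x v : E) :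
    fderiv ℝ (subord (n + 1) φ) x v
      = subord n (SchwartzMap.evalCLM ℝ E F v (fderivCLM ℝ E F φ)) x := by
  rw [(subord_hasFDerivAt n φ x).fderiv]
  exact ContinuousLinearMap.integral_apply (integrand_integrable n (fderivCLM ℝ E F φ) x) v

variable [FiniteDimensional ℝ E] [MeasureSpace E] [BorelSpace E]
  [(volume : Measure E).IsAddHaarMeasure]

/-- Joint integrability in `(r, x)`, which gives both `subord n φ ∈ L¹` and Fubini for its Fourier
transform: integrating in `x` first turns the weight `rⁿ e^{-r²}` into `r^{n + dim E} e^{-r²} ‖φ‖₁`. -/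
lemma subord_prod_integrable (n : ℕ) (φ : 𝓢(E, F)) :
    Integrable (fun p : ℝ × E => (p.1 ^ n * Real.exp (-p.1 ^ 2)) • φ (p.1⁻¹ • p.2))
      ((volume.restrict (Ioi (0 : ℝ))).prod (volume : Measure E)) := by
  have hm : AEStronglyMeasurable
      (fun p : ℝ × E => (p.1 ^ n * Real.exp (-p.1 ^ 2)) • φ (p.1⁻¹ • p.2))
      ((volume.restrict (Ioi (0 : ℝ))).prod (volume : Measure E)) := by
    have h := (integrand_continuousOn n φ).aestronglyMeasurable (μ := volume.prod volume)
      (measurableSet_Ioi.prod MeasurableSet.univ)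
    rwa [← Measure.prod_restrict, Measure.restrict_univ] at h
  rw [integrable_prod_iff hm]
  constructor
  · refine (ae_restrict_iff' measurableSet_Ioi).2 (ae_of_all _ fun r hr => ?_)
    have hr0 : r⁻¹ ≠ 0 := inv_ne_zero (ne_of_gt hr)
    exact ((integrable_comp_smul_iff volume φ hr0).2 φ.integrable).smul (r ^ n * Real.exp (-r ^ 2))
  · refine ((weight_integrable (n + Module.finrank ℝ E)).mul_const (∫ y, ‖φ y‖)).congr ?_
    refine (ae_restrict_iff' measurableSet_Ioi).2 (ae_of_all _ fun r hr => ?_)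
    simp only [norm_smul]
    rw [integral_const_mul, Real.norm_of_nonneg (weight_nonneg n hr),
      Measure.integral_comp_inv_smul_of_nonneg volume (fun y => ‖φ y‖) (le_of_lt hr), smul_eq_mul]
    ring

lemma subord_integrable (n : ℕ) (φ : 𝓢(E, F)) : Integrable (subord n φ) :=
  (subord_prod_integrable n φ).integral_prod_right

end Subordination

/-! ### Multi-index derivatives and scaling -/

/-- A multi-index derivative of length at most `n` of `subord n φ` is again a superposition of
the same kind, hence integrable. -/
lemma foldr_pd_subord (d : ℕ) (a : Fin d → ℕ) (l : List (Fin d)) :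
    ∀ n : ℕ, (l.map a).sum ≤ n → ∀ φ : 𝓢(Vd d, ℝ), ∃ ψ : 𝓢(Vd d, ℝ),
      l.foldr (fun i g => (pd d i)^[a i] g) (subord n φ) = subord (n - (l.map a).sum) ψ := by
  have step : ∀ (i : Fin d) (k m : ℕ), k ≤ m → ∀ ψ : 𝓢(Vd d, ℝ), ∃ ψ' : 𝓢(Vd d, ℝ),
      (pd d i)^[k] (subord m ψ) = subord (m - k) ψ' := by
    intro i k
    induction k with
    | zero => exact fun m _ ψ => ⟨ψ, rfl⟩
    | succ k ih =>
      intro m hm ψ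
      obtain ⟨m, rfl⟩ : ∃ m', m = m' + 1 := ⟨m - 1, by omega⟩
      rw [Function.iterate_succ_apply]
      have : pd d i (subord (m + 1) ψ)
          = subord m (SchwartzMap.evalCLM ℝ (Vd d) ℝ (Pi.single i 1)
              (fderivCLM ℝ (Vd d) ℝ ψ)) :=
        funext fun x => fderiv_subord_apply m ψ x _
      rw [this, Nat.add_sub_add_right]
      exact ih m (by omega) _
  intro n hn φ
  induction l with
  | nil => exact ⟨φ, rfl⟩
  | cons i l ih =>
    rw [List.map_cons, List.sum_cons] at hn ⊢
    obtain ⟨ψ, hψ⟩ := ih (by omega)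
    rw [List.foldr_cons, hψ]
    obtain ⟨ψ', h'⟩ := step i (a i) (n - (l.map a).sum) (by omega) ψ
    exact ⟨ψ', by rw [h']; congr 1; omega⟩

lemma sum_map_finRange (d : ℕ) (a : Fin d → ℕ) : ((List.finRange d).map a).sum = ∑ i, a i := by
  rw [← List.ofFn_eq_map, List.sum_ofFn]

lemma pd_scale (d : ℕ) (i : Fin d) (f : Vd d → ℝ) (c s : ℝ) :
    pd d i (fun x => c * f (s • x)) = fun x => (c * s) * pd d i f (s • x) := by
  funext x
  have h : (fun x => c * f (s • x)) = c • (fun x => f (s • x)) := rfl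
  simp only [pd]
  rw [h, fderiv_const_smul_field, Pi.smul_apply, fderiv_comp_smul]
  simp [mul_assoc]

/-- Derivatives of a dilated function: `∂^a (c f(s ·)) = c s^{|a|} (∂^a f)(s ·)`. -/
lemma foldr_pd_scale (d : ℕ) (a : Fin d → ℕ) (l : List (Fin d)) (f : Vd d → ℝ) (c s : ℝ) :
    l.foldr (fun i g => (pd d i)^[a i] g) (fun x => c * f (s • x))
      = fun x => (c * s ^ (l.map a).sum)
          * l.foldr (fun i g => (pd d i)^[a i] g) f (s • x) := by
  have step : ∀ (i : Fin d) (k : ℕ) (c : ℝ) (g : Vd d → ℝ),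
      (pd d i)^[k] (fun x => c * g (s • x)) = fun x => (c * s ^ k) * (pd d i)^[k] g (s • x) := by
    intro i k
    induction k with
    | zero => intro c g; simp
    | succ k ih =>
      intro c g
      rw [Function.iterate_succ_apply, pd_scale, ih, Function.iterate_succ_apply]
      funext x
      ring
  induction l with
  | nil => simp
  | cons i l ih =>
    rw [List.foldr_cons, ih, step, List.foldr_cons, List.map_cons, List.sum_cons]
    funext x
    rw [pow_add]
    ring

/-! ### The Gaussian as a Schwartz function -/

lemma norm_sq_le_sum_sq (d : ℕ) (x : Vd d) : ‖x‖ ^ 2 ≤ ∑ i, x i ^ 2 := by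
  have h0 : 0 ≤ ∑ i, x i ^ 2 := Finset.sum_nonneg fun i _ => sq_nonneg _
  have h : ‖x‖ ≤ √(∑ i, x i ^ 2) := by
    refine (pi_norm_le_iff_of_nonneg (Real.sqrt_nonneg _)).2 fun i => ?_
    refine Real.le_sqrt_of_sq_le ?_
    rw [Real.norm_eq_abs, sq_abs]
    exact Finset.single_le_sum (f := fun i => x i ^ 2) (fun i _ => sq_nonneg _)
      (Finset.mem_univ i)
  calc ‖x‖ ^ 2 ≤ √(∑ i, x i ^ 2) ^ 2 := by gcongr
    _ = _ := Real.sq_sqrt h0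

/-- A Gaussian beats polynomial growth, with an explicit constant. -/
lemma one_add_pow_mul_exp_le (N : ℕ) {u s : ℝ} (hu : 0 ≤ u) (hs : u ^ 2 ≤ s) :
    (1 + u) ^ N * Real.exp (-(1 / 4) * s) ≤ N.factorial * Real.exp 2 := by
  have hf : (0 : ℝ) < N.factorial := by positivity
  have h1 := Real.pow_div_factorial_le_exp (1 + u) (by linarith) N
  rw [div_le_iff₀ hf] at h1
  -- `1 + u ≤ 2 + u² / 4` since `(u / 2 - 1)² ≥ 0`.
  have h2 : Real.exp (1 + u) * Real.exp (-(1 / 4) * s) ≤ Real.exp 2 := by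
    rw [← Real.exp_add]
    exact Real.exp_le_exp.2 (by nlinarith [sq_nonneg (u / 2 - 1)])
  calc (1 + u) ^ N * Real.exp (-(1 / 4) * s)
      ≤ (Real.exp (1 + u) * N.factorial) * Real.exp (-(1 / 4) * s) := by gcongr
    _ = N.factorial * (Real.exp (1 + u) * Real.exp (-(1 / 4) * s)) := by ring
    _ ≤ _ := by gcongr

/-- The Gaussian `x ↦ e^{-|x|²/4}` (with the Euclidean `|x|`) as a Schwartz function. -/
def gauss (d : ℕ) : 𝓢(Vd d, ℝ) where
  toFun x := Real.exp (-(1 / 4) * ∑ i, x i ^ 2)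
  smooth' := by fun_prop
  decay' := by
    intro k n
    have hq : Function.HasTemperateGrowth (fun x : Vd d => -(1 / 4) * ∑ i, x i ^ 2) := by
      refine (Function.HasTemperateGrowth.const _).mul
        (Function.HasTemperateGrowth.sum fun i _ => Function.HasTemperateGrowth.pow ?_ 2)
      exact (ContinuousLinearMap.proj (R := ℝ) (φ := fun _ : Fin d => ℝ) i).hasTemperateGrowth
    obtain ⟨m, C, hC, h⟩ := hq.norm_iteratedFDeriv_le_uniform n
    refine ⟨n.factorial * (1 + C) ^ n * ((k + m * n).factorial * Real.exp 2), fun x => ?_⟩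
    have hx := norm_nonneg x
    set e := Real.exp (-(1 / 4) * ∑ i, x i ^ 2) with he
    have h1 : ‖iteratedFDeriv ℝ n (Real.exp ∘ fun x : Vd d => -(1 / 4) * ∑ i, x i ^ 2) x‖
        ≤ n.factorial * e * ((1 + C) * (1 + ‖x‖) ^ m) ^ n := by
      refine norm_iteratedFDeriv_comp_le (N := ∞) Real.contDiff_exp hq.1
        (by exact_mod_cast le_top) x (fun i _ => ?_) fun i hi hin => ?_
      · rw [norm_iteratedFDeriv_eq_norm_iteratedDeriv, iteratedDeriv_eq_iterate,
          Real.iter_deriv_exp, Real.norm_of_nonneg (Real.exp_nonneg _)]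
      · have hb : 1 ≤ (1 + C) * (1 + ‖x‖) ^ m :=
          one_le_mul_of_one_le_of_one_le (by linarith) (one_le_pow₀ (by linarith))
        calc _ ≤ C * (1 + ‖x‖) ^ m := h i hin x
          _ ≤ (1 + C) * (1 + ‖x‖) ^ m := by gcongr; linarith
          _ ≤ _ := le_self_pow₀ hb (by omega)
    calc ‖x‖ ^ k * _ ≤ (1 + ‖x‖) ^ k * (n.factorial * e * ((1 + C) * (1 + ‖x‖) ^ m) ^ n) := by
          refine mul_le_mul ?_ h1 (norm_nonneg _) (by positivity)
          gcongr
          linarith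
      _ = n.factorial * (1 + C) ^ n * ((1 + ‖x‖) ^ (k + m * n) * e) := by
          rw [mul_pow, ← pow_mul, pow_add]
          ring
      _ ≤ _ := by
          refine mul_le_mul_of_nonneg_left ?_ (by positivity)
          exact one_add_pow_mul_exp_le _ hx (norm_sq_le_sum_sq d x)

lemma gauss_apply (d : ℕ) (x : Vd d) : gauss d x = Real.exp (-(1 / 4) * ∑ i, x i ^ 2) := rfl

lemma subord_gauss_nonneg (d n : ℕ) (x : Vd d) : 0 ≤ subord n (gauss d) x :=
  setIntegral_nonneg measurableSet_Ioi fun _ hr =>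
    mul_nonneg (weight_nonneg n hr) (Real.exp_nonneg _)

/-! ### Fourier transforms -/

/-- Fourier transform of a dilated function. -/
lemma ft_comp_inv_smul (d : ℕ) (f : Vd d → ℝ) {r : ℝ} (hr : 0 < r) (c : ℝ) (ξ : Vd d) :
    ft d (fun x => c * f (r⁻¹ • x)) ξ = (c * r ^ d : ℝ) * ft d f (r • ξ) := by
  have h := Measure.integral_comp_inv_smul_of_nonneg (volume : Measure (Vd d))
    (fun x => Complex.exp (-Complex.I * (∑ i, (x i : ℂ) * ((r • ξ) i : ℂ))) * (f x : ℂ)) hr.le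
  rw [Module.finrank_fin_fun] at h
  unfold ft
  rw [Complex.ofReal_mul, mul_assoc, ← Complex.real_smul, ← Complex.real_smul, ← h,
    Complex.real_smul, ← integral_const_mul]
  congr 1
  funext x
  have : ∀ i, ((r⁻¹ • x) i : ℂ) * ((r • ξ) i : ℂ) = (x i : ℂ) * (ξ i : ℂ) := by
    intro i
    have hr' : (r : ℂ) ≠ 0 := by exact_mod_cast hr.ne'
    simp only [Pi.smul_apply, smul_eq_mul]
    push_cast
    field_simp
  simp only [this]
  push_cast
  ring

lemma ft_gauss (d : ℕ) (ξ : Vd d) :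
    ft d (gauss d) ξ = (((4 * Real.pi) ^ (d / 2 : ℝ) * Real.exp (-∑ i, ξ i ^ 2) : ℝ) : ℂ) := by
  have h := GaussianFourier.integral_cexp_neg_mul_sum_add (b := 1 / 4) (by norm_num)
    (fun i => -Complex.I * (ξ i : ℂ))
  have e1 : ft d (gauss d) ξ = ∫ v : Vd d, Complex.exp
      (-(1 / 4) * ∑ i, (v i : ℂ) ^ 2 + ∑ i, -Complex.I * (ξ i : ℂ) * (v i : ℂ)) := by
    unfold ft
    congr 1
    funext x
    rw [gauss_apply, Complex.ofReal_exp, ← Complex.exp_add, Finset.mul_sum, add_comm]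
    push_cast
    congr 2
    exact Finset.sum_congr rfl fun i _ => by ring
  rw [e1, h, Fintype.card_fin]
  push_cast
  congr 1
  · rw [Complex.ofReal_cpow (by positivity)]
    push_cast
    congr 1
    ring
  · congr 1
    simp [mul_pow]

/-- The Gamma integral `∫₀^∞ r^{2d+3} e^{-b r²} dr = (d+1)! / (2 b^{d+2})`. -/
lemma gamma_integral (d : ℕ) {b : ℝ} (hb : 0 < b) :
    ∫ r in Ioi (0 : ℝ), r ^ (2 * d + 3) * Real.exp (-b * r ^ 2)
      = (Real.Gamma (d + 2) / 2) * (b ^ (d + 2))⁻¹ := by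
  have h := integral_rpow_mul_exp_neg_mul_rpow (p := 2) (q := (2 * d + 3 : ℕ)) two_pos
    (by have : (0 : ℝ) ≤ (2 * d + 3 : ℕ) := Nat.cast_nonneg _
        linarith) hb
  have e : (((2 * d + 3 : ℕ) : ℝ) + 1) / 2 = d + 2 := by push_cast; ring
  simp only [Real.rpow_natCast, Real.rpow_two] at h
  rw [h, neg_div, e, Real.rpow_neg hb.le]
  have : b ^ ((d : ℝ) + 2) = b ^ (d + 2) := by
    rw [← Real.rpow_natCast]
    push_cast
    rfl
  rw [this]
  ring

/-- Subordination: up to a positive constant, `subord (d + 3) (gauss d)` has Fourier transform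
`(1 + |ξ|²)^{-(d+2)}`. -/
lemma ft_subord (d : ℕ) : ∃ c : ℝ, 0 < c ∧ ∀ ξ : Vd d,
    ft d (subord (d + 3) (gauss d)) ξ = (c * ((1 + ∑ i, ξ i ^ 2) ^ (d + 2))⁻¹ : ℝ) := by
  refine ⟨(4 * Real.pi) ^ (d / 2 : ℝ) * (Real.Gamma (d + 2) / 2),
    mul_pos (by positivity) (half_pos (Real.Gamma_pos_of_pos (by positivity))), fun ξ => ?_⟩
  set S := ∑ i, ξ i ^ 2 with hS
  have hS0 : 0 ≤ S := Finset.sum_nonneg fun i _ => sq_nonneg _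
  have hint : Integrable (fun p : ℝ × Vd d =>
      Complex.exp (-Complex.I * (∑ i, (p.2 i : ℂ) * (ξ i : ℂ)))
        * (((p.1 ^ (d + 3) * Real.exp (-p.1 ^ 2)) • gauss d (p.1⁻¹ • p.2) : ℝ) : ℂ))
      ((volume.restrict (Ioi (0 : ℝ))).prod volume) := by
    refine (subord_prod_integrable (d + 3) (gauss d)).ofReal.bdd_mul (c := 1)
      (Continuous.aestronglyMeasurable (by fun_prop)) (ae_of_all _ fun p => le_of_eq ?_)
    have : -Complex.I * (∑ i, (p.2 i : ℂ) * (ξ i : ℂ))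
        = ((-∑ i, p.2 i * ξ i : ℝ) : ℂ) * Complex.I := by
      push_cast
      ring
    rw [this, Complex.norm_exp_ofReal_mul_I]
  have e1 : ft d (subord (d + 3) (gauss d)) ξ = ∫ x : Vd d, ∫ r in Ioi (0 : ℝ),
      Complex.exp (-Complex.I * (∑ i, (x i : ℂ) * (ξ i : ℂ)))
        * (((r ^ (d + 3) * Real.exp (-r ^ 2)) • gauss d (r⁻¹ • x) : ℝ) : ℂ) := by
    unfold ft subord
    congr 1
    funext x
    rw [← integral_complex_ofReal, ← integral_const_mul]
  have e2 : ∀ r ∈ Ioi (0 : ℝ), (∫ x : Vd d,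
      Complex.exp (-Complex.I * (∑ i, (x i : ℂ) * (ξ i : ℂ)))
        * (((r ^ (d + 3) * Real.exp (-r ^ 2)) • gauss d (r⁻¹ • x) : ℝ) : ℂ))
      = (((4 * Real.pi) ^ (d / 2 : ℝ)
          * (r ^ (2 * d + 3) * Real.exp (-(1 + S) * r ^ 2)) : ℝ) : ℂ) := by
    intro r hr
    have h := ft_comp_inv_smul d (gauss d) hr (r ^ (d + 3) * Real.exp (-r ^ 2)) ξ
    rw [ft_gauss, ← Complex.ofReal_mul] at h
    refine h.trans ?_
    have h3 : ∑ i, (r • ξ) i ^ 2 = r ^ 2 * S := by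
      simp [mul_pow, hS, Finset.mul_sum]
    have h4 : Real.exp (-(1 + S) * r ^ 2) = Real.exp (-r ^ 2) * Real.exp (-(r ^ 2 * S)) := by
      rw [← Real.exp_add]
      congr 1
      ring
    rw [h3, h4]
    congr 1
    ring
  rw [e1, ← integral_integral_swap hint, setIntegral_congr_fun measurableSet_Ioi e2,
    integral_complex_ofReal, integral_const_mul, gamma_integral d (by linarith)]
  congr 1
  ring

/-- Uniqueness: nonnegative integrable functions with the same Fourier transform agree a.e.
They are densities of finite measures with the same characteristic function. -/
lemma ae_eq_of_ft_eq (d : ℕ) {f g : Vd d → ℝ} (hf : Integrable f) (hg : Integrable g)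
    (hf0 : ∀ x, 0 ≤ f x) (hg0 : ∀ x, 0 ≤ g x) (h : ∀ ξ, ft d f ξ = ft d g ξ) :
    f =ᵐ[volume] g := by
  have key : ∀ {f : Vd d → ℝ}, Integrable f → (∀ x, 0 ≤ f x) → ∀ L : StrongDual ℝ (Vd d),
      charFunDual (volume.withDensity fun x => ENNReal.ofReal (f x)) L
        = ft d f (fun i => -L (Pi.single i 1)) := by
    intro f hf hf0 L
    rw [charFunDual_apply, integral_withDensity_eq_integral_toReal_smul₀
      hf.aemeasurable.ennreal_ofReal (ae_of_all _ fun x => ENNReal.ofReal_lt_top)]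
    unfold ft
    congr 1
    funext x
    have hL : L x = ∑ i, x i * L (Pi.single i 1) := by
      conv_lhs => rw [← Finset.univ_sum_single x]
      rw [map_sum]
      refine Finset.sum_congr rfl fun i _ => ?_
      rw [← smul_eq_mul, ← map_smul, ← Pi.single_smul]
      simp
    rw [ENNReal.toReal_ofReal (hf0 x), Complex.real_smul, mul_comm, hL]
    congr 2
    push_cast
    simp only [mul_neg, Finset.sum_neg_distrib]
    ring
  have fin : ∀ {f : Vd d → ℝ}, Integrable f → (∀ x, 0 ≤ f x) →
      ∫⁻ x, ENNReal.ofReal (f x) ≠ ⊤ := by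
    intro f hf hf0
    rw [← ofReal_integral_eq_lintegral_ofReal hf (ae_of_all _ hf0)]
    exact ENNReal.ofReal_ne_top
  have i1 := isFiniteMeasure_withDensity (fin hf hf0)
  have i2 := isFiniteMeasure_withDensity (fin hg hg0)
  have hm : (volume.withDensity fun x => ENNReal.ofReal (f x))
      = volume.withDensity fun x => ENNReal.ofReal (g x) :=
    Measure.ext_of_charFunDual (funext fun L => by rw [key hf hf0, key hg hg0, h])
  rw [withDensity_eq_iff hf.aemeasurable.ennreal_ofReal hg.aemeasurable.ennreal_ofReal
    (fin hf hf0)] at hm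
  filter_upwards [hm] with x hx
  exact (ENNReal.ofReal_eq_ofReal_iff (hf0 x) (hg0 x)).1 hx

/-! ### The kernel bounds -/

/-- L¹ bounds on derivatives of the Bessel-type kernel: for every multi-index
`a` with `|a| ≤ d` there is `C` such that `∂^a K̃_μ` exists (for a representative of the
a.e.-defined kernel which is `d`-times continuously differentiable), is integrable, and
`‖∂^a K̃_μ‖_{L¹} ≤ C·[μ]^{-|a|}` for all `μ ∈ (0,1]`. -/
theorem stmt10 (d : ℕ) (hd : 0 < d) (σ : ℝ) (hσ : 0 < σ)
    (K : ℝ → Vd d → ℝ) (hK : IsBessel d σ K) :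
    ∀ a : Fin d → ℕ, (∑ i, a i) ≤ d →
      ∃ C : ℝ, ∀ μ ∈ Set.Ioc (0 : ℝ) 1,
        ∃ K' : Vd d → ℝ, K' =ᵐ[volume] K μ ∧ ContDiff ℝ (d : ℕ∞) K' ∧
          Integrable (mderiv d a K') ∧
          (∫ x, |mderiv d a K' x|)
            ≤ C * (μ ^ (1 / σ)) ^ (-((∑ i, a i : ℕ) : ℝ)) := by
  intro a ha
  obtain ⟨c, hc, hft⟩ := ft_subord d
  -- The kernel at scale one, up to the normalizing constant `c`.
  set G := subord (d + 3) (gauss d) with hG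
  have hG_smooth : ContDiff ℝ (d : ℕ∞) G :=
    (subord_contDiff (d + 3) (gauss d)).of_le 
      (WithTop.coe_le_coe.2 (Nat.cast_le.2 (by omega : d ≤ d + 3)))
  have hD : Integrable (mderiv d a G) := by
    obtain ⟨ψ, hψ⟩ := foldr_pd_subord d a (List.finRange d) (d + 3)
      (by rw [sum_map_finRange]; omega) (gauss d)
    have : mderiv d a G = _ := hψ
    rw [this]
    exact subord_integrable _ _
  refine ⟨c⁻¹ * ∫ x, |mderiv d a G x|, fun μ hμ => ?_⟩
  obtain ⟨hK0, hKi, -, hKft⟩ := hK μ hμ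
  set t := μ ^ (1 / σ) with ht
  have ht0 : 0 < t := Real.rpow_pos_of_pos hμ.1 _
  have htd : 0 < t ^ d := pow_pos ht0 d
  have hmd : mderiv d a (fun x => (c⁻¹ * (t ^ d)⁻¹) * G (t⁻¹ • x))
      = fun x => (c⁻¹ * (t ^ d)⁻¹ * t⁻¹ ^ (∑ i, a i)) * mderiv d a G (t⁻¹ • x) := by
    have := foldr_pd_scale d a (List.finRange d) G (c⁻¹ * (t ^ d)⁻¹) t⁻¹
    rwa [sum_map_finRange] at this
  refine ⟨fun x => (c⁻¹ * (t ^ d)⁻¹) * G (t⁻¹ • x), ?_, ?_, ?_, ?_⟩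
  · refine ae_eq_of_ft_eq d ?_ hKi (fun x => ?_) hK0 fun ξ => ?_
    · exact ((integrable_comp_smul_iff volume G (inv_ne_zero ht0.ne')).2
        (subord_integrable _ _)).const_mul _
    · exact mul_nonneg (by positivity) (subord_gauss_nonneg d _ _)
    · rw [hKft, ft_comp_inv_smul d G ht0, hft, ← Complex.ofReal_mul, ← Complex.ofReal_inv]
      congr 1
      have : ∑ i, (t • ξ) i ^ 2 = t ^ 2 * ∑ i, ξ i ^ 2 := by
        simp [mul_pow, Finset.mul_sum]
      rw [this]
      field_simp
  · exact contDiff_const.mul (hG_smooth.comp (contDiff_const_smul _))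
  · rw [hmd]
    exact ((integrable_comp_smul_iff volume _ (inv_ne_zero ht0.ne')).2 hD).const_mul _
  · rw [hmd]
    have hk : 0 ≤ c⁻¹ * (t ^ d)⁻¹ * t⁻¹ ^ (∑ i, a i) := by positivity
    simp only [abs_mul, abs_of_nonneg hk]
    rw [integral_const_mul, Measure.integral_comp_inv_smul_of_nonneg volume
      (fun y => |mderiv d a G y|) ht0.le, Module.finrank_fin_fun, Real.rpow_neg ht0.le,
      Real.rpow_natCast, smul_eq_mul, inv_pow]
    apply le_of_eq
    field_simp
end
end

section
/- Pathwise supremum bound from moment bounds on derivatives (Kolmogorov-type argument in the scale parameters): Fix a positive integer d, n∈ℕ₊, m∈ℕ, σ>0, ε>0 and ρ≤0, and write [μ]:=μ^{1/σ}. There exists a constant c>0, depending only on n, σ and ε, with the following property. Let (Ω,𝔽,ℙ) be a probability space and ζ:Ω×(0,1]²→𝒱^m a random function (κ,μ)↦ζ_{κ,μ} such that, almost surely, ζ is continuously differentiable in κ and in μ with a continuous mixed second derivative ∂_μ∂_κζ_{κ,μ}, and such that all the norms below are measurable in ω. If for some C>0 one has 𝔼‖∂_μ^s∂_κ^rζ_{κ,μ}‖_{𝒱^m}^n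 ≤ C·[κ]^{n(ε−σ)r}·[μ]^{n(ρ+(ε−σ)s)} for all s,r∈{0,1} and all κ,μ∈(0,1], then 𝔼( sup_{κ,μ∈(0,1]} [μ]^{−nρ}·‖ζ_{κ,μ}‖_{𝒱^m}^n ) ≤ c·C. -/
/-!
Write `‖·‖` for the `𝒱^m` norm and `a = ε/σ`. Applying the fundamental theorem of calculus first in
`κ`, then in `μ`, from the corner `(1,1)`, gives
`‖ζ_{κ,μ}‖ ≤ ‖ζ_{1,1}‖ + ∫_μ^1 ‖∂_μζ_{1,s}‖ ds + ∫_κ^1 ‖∂_κζ_{r,1}‖ dr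
  + ∫_κ^1 ∫_μ^1 ‖∂_μ∂_κζ_{r,s}‖ ds dr`.
Because `ρ ≤ 0`, the weight `[μ]^{-ρ}` is at most `1` and at most `[s]^{-ρ}` for `s ≥ μ`, so it can
be moved under the integrals, which may then be extended to all of `(0,1]`. This bounds the supremum
by four random variables independent of `(κ,μ)` (`RegularPath.ofReal_bw_mul_vNorm_le`). By Minkowski's
integral inequality (`lintegral_lintegral_pow_le`, proved from Jensen's inequality with weight and
Tonelli's theorem) and the moment bounds, their `n`-th moments are at most `C` times a power of
`∫_0^1 t^{a-1} dt = 1/a`; the exponent `ρ` cancels, so the constant depends on `n` and `a` only.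

Measurability of the supremum is not needed, since the lower Lebesgue integral is monotone. For
Tonelli's theorem, joint measurability in `ω` and the scale parameters follows from the almost sure
continuity of the norms of the derivatives in those parameters (`exists_measurable_version`).
-/

open MeasureTheory

noncomputable section

/-- Integration of a function against a finite signed measure, via the Jordan
decomposition. -/
def smInt {α : Type} [MeasurableSpace α] (s : MeasureTheory.SignedMeasure α) (f : α → ℝ) : ℝ :=
  (∫ y, f y ∂s.toJordanDecomposition.posPart) - ∫ y, f y ∂s.toJordanDecomposition.negPart

/-- The total variation norm of a finite signed measure. -/
def tvNorm {α : Type} [MeasurableSpace α] (s : MeasureTheory.SignedMeasure α) : ℝ :=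
  (s.totalVariation Set.univ).toReal

/-- A kernel on `ℝ^d × Borel((ℝ^d)^m)`: for each `x ∈ ℝ^d` a finite signed measure on
`(ℝ^d)^m`. -/
abbrev Ker (d m : ℕ) := Vd d → MeasureTheory.SignedMeasure (Fin m → Vd d)

/-- The set `A + x` (every component of `A` shifted by `x`), written as a preimage. -/
def shiftSet (d m : ℕ) (x : Vd d) (A : Set (Fin m → Vd d)) : Set (Fin m → Vd d) :=
  (fun z : Fin m → Vd d => fun j => z j - x) ⁻¹' A

/-- Membership in the space `𝒱^m`: (i) for every Borel set `A` the map `x ↦ V(x;A+x)` is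
continuous and `2π`-periodic in each coordinate, (ii) each `V(x;·)` is a signed measure of
finite total variation (automatic for `SignedMeasure`), and (iii) the norm
`‖V‖ = sup_x |V(x;·)|((ℝ^d)^m)` is finite. -/
structure IsV (d m : ℕ) (V : Ker d m) : Prop where
  cont : ∀ A : Set (Fin m → Vd d), MeasurableSet A →
    Continuous fun x : Vd d => V x (shiftSet d m x A)
  periodic : ∀ A : Set (Fin m → Vd d), MeasurableSet A → ∀ (x : Vd d) (i : Fin d),
    V (x + Pi.single i (2 * Real.pi))
        (shiftSet d m (x + Pi.single i (2 * Real.pi)) A)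
      = V x (shiftSet d m x A)
  bdd : BddAbove (Set.range fun x : Vd d => tvNorm (V x))

/-- The `𝒱^m` norm `‖V‖ = sup_x ∫_{(ℝ^d)^m} |V(x; dy₁⋯dy_m)|`. -/
def vNorm (d m : ℕ) (V : Ker d m) : ℝ := ⨆ x : Vd d, tvNorm (V x)

open scoped ENNReal

/-! ### The total variation seminorm on kernels -/

section Kernel

variable {α : Type} [MeasurableSpace α]

lemma tvNorm_eq (s : SignedMeasure α) :
    tvNorm s = s.toJordanDecomposition.posPart.real Set.univ
      + s.toJordanDecomposition.negPart.real Set.univ := by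
  rw [tvNorm, SignedMeasure.totalVariation, Measure.add_apply,
    ENNReal.toReal_add (measure_ne_top _ _) (measure_ne_top _ _)]
  rfl

lemma abs_apply_sub_apply_compl_le (s : SignedMeasure α) {A : Set α} (hA : MeasurableSet A) :
    |s A - s Aᶜ| ≤ tvNorm s := by
  have h1 := s.apply_eq_posPart_real_sub_negPart_real hA
  have h2 := s.apply_eq_posPart_real_sub_negPart_real hA.compl
  have h3 := measureReal_add_measureReal_compl (μ := s.toJordanDecomposition.posPart) hA
  have h4 := measureReal_add_measureReal_compl (μ := s.toJordanDecomposition.negPart) hA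
  have p1 := measureReal_nonneg (μ := s.toJordanDecomposition.posPart) (s := A)
  have p2 := measureReal_nonneg (μ := s.toJordanDecomposition.posPart) (s := Aᶜ)
  have p3 := measureReal_nonneg (μ := s.toJordanDecomposition.negPart) (s := A)
  have p4 := measureReal_nonneg (μ := s.toJordanDecomposition.negPart) (s := Aᶜ)
  rw [tvNorm_eq, h1, h2, ← h3, ← h4, abs_le]
  constructor <;> linarith

/-- The total variation is attained on a Hahn decomposition, so it is the maximum of the linear
functionals `s ↦ s A - s Aᶜ`. -/
lemma exists_apply_sub_apply_compl_eq (s : SignedMeasure α) :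
    ∃ A, MeasurableSet A ∧ s A - s Aᶜ = tvNorm s := by
  obtain ⟨i, hi₁, hi₂, hi₃, hp, hn⟩ := s.toJordanDecomposition_spec
  refine ⟨i, hi₁, ?_⟩
  rw [tvNorm_eq, hp, hn, SignedMeasure.toMeasureOfZeroLE_real_apply _ hi₂ hi₁ MeasurableSet.univ,
    SignedMeasure.toMeasureOfLEZero_real_apply _ hi₃ hi₁.compl MeasurableSet.univ]
  simp [sub_eq_add_neg]

lemma tvNorm_nonneg (s : SignedMeasure α) : 0 ≤ tvNorm s := ENNReal.toReal_nonneg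

lemma tvNorm_add_le (s t : SignedMeasure α) : tvNorm (s + t) ≤ tvNorm s + tvNorm t := by
  obtain ⟨A, hA, h⟩ := exists_apply_sub_apply_compl_eq (s + t)
  have h1 := (le_abs_self _).trans (abs_apply_sub_apply_compl_le s hA)
  have h2 := (le_abs_self _).trans (abs_apply_sub_apply_compl_le t hA)
  rw [← h]
  simp only [add_apply]
  linarith

lemma tvNorm_smul_le (c : ℝ) (s : SignedMeasure α) : tvNorm (c • s) ≤ |c| * tvNorm s := by
  obtain ⟨A, hA, h⟩ := exists_apply_sub_apply_compl_eq (c • s)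
  rw [← h]
  simp only [smul_apply, smul_eq_mul, ← mul_sub]
  refine (le_abs_self _).trans ?_
  rw [abs_mul]
  exact mul_le_mul_of_nonneg_left (abs_apply_sub_apply_compl_le s hA) (abs_nonneg c)

lemma tvNorm_sub_le (s t : SignedMeasure α) : tvNorm (s - t) ≤ tvNorm s + tvNorm t := by
  obtain ⟨A, hA, h⟩ := exists_apply_sub_apply_compl_eq (s - t)
  have h1 := (le_abs_self _).trans (abs_apply_sub_apply_compl_le s hA)
  have h2 := (neg_le_abs _).trans (abs_apply_sub_apply_compl_le t hA)
  rw [← h]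
  simp only [sub_apply]
  linarith

variable {d m : ℕ}

/-- Kernels whose total variation is bounded uniformly in `x`: condition (iii) of `IsV`, which is
all that is needed for `vNorm` to be a genuine supremum. -/
def TVBdd (V : Ker d m) : Prop := BddAbove (Set.range fun x : Vd d => tvNorm (V x))

lemma TVBdd.tvNorm_le {V : Ker d m} (h : TVBdd V) (x : Vd d) : tvNorm (V x) ≤ vNorm d m V :=
  le_ciSup h x

lemma TVBdd.sub {V W : Ker d m} (hV : TVBdd V) (hW : TVBdd W) : TVBdd fun x => V x - W x := by
  refine ⟨vNorm d m V + vNorm d m W, ?_⟩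
  rintro _ ⟨x, rfl⟩
  exact (tvNorm_sub_le _ _).trans (add_le_add (hV.tvNorm_le x) (hW.tvNorm_le x))

lemma TVBdd.smul {V : Ker d m} (hV : TVBdd V) (c : ℝ) : TVBdd fun x => c • V x := by
  refine ⟨|c| * vNorm d m V, ?_⟩
  rintro _ ⟨x, rfl⟩
  exact (tvNorm_smul_le _ _).trans (mul_le_mul_of_nonneg_left (hV.tvNorm_le x) (abs_nonneg c))

lemma vNorm_nonneg (V : Ker d m) : 0 ≤ vNorm d m V := Real.iSup_nonneg fun _ => tvNorm_nonneg _

lemma vNorm_sub_le {V W : Ker d m} (hV : TVBdd V) (hW : TVBdd W) :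
    |vNorm d m V - vNorm d m W| ≤ vNorm d m fun x => V x - W x := by
  have hVW := hV.sub hW
  rw [abs_le]
  constructor
  · suffices vNorm d m W ≤ vNorm d m V + vNorm d m fun x => V x - W x by linarith
    refine ciSup_le fun x => ?_
    have := tvNorm_sub_le (V x) (V x - W x)
    rw [sub_sub_cancel] at this
    exact this.trans (add_le_add (hV.tvNorm_le x) (hVW.tvNorm_le x))
  · suffices vNorm d m V ≤ (vNorm d m fun x => V x - W x) + vNorm d m W by linarith
    refine ciSup_le fun x => ?_
    have := tvNorm_add_le (V x - W x) (W x)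
    rw [sub_add_cancel] at this
    exact this.trans (add_le_add (hVW.tvNorm_le x) (hW.tvNorm_le x))

/-- Continuity in the `𝒱^m` norm implies continuity of the norm. -/
lemma tendsto_vNorm {ι : Type} {l : Filter ι} {g : ι → Ker d m} {V : Ker d m}
    (hg : ∀ᶠ i in l, TVBdd (g i)) (hV : TVBdd V)
    (h : Filter.Tendsto (fun i => vNorm d m fun x => g i x - V x) l (nhds 0)) :
    Filter.Tendsto (fun i => vNorm d m (g i)) l (nhds (vNorm d m V)) := by
  rw [tendsto_iff_norm_sub_tendsto_zero]
  refine squeeze_zero' (Filter.Eventually.of_forall fun _ => norm_nonneg _) ?_ h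
  filter_upwards [hg] with i hi
  exact vNorm_sub_le hi hV

/-! ### The fundamental theorem of calculus in the kernel norm -/

/-- If `g` is the continuous derivative of the curve `f` on `(0,1]` in the `𝒱^m` norm, then
`‖f a‖ ≤ ‖f 1‖ + ∫_a^1 ‖g‖`. No integral of kernels is needed: at a fixed point `x`, the total
variation of `f a x` is attained by a functional `s ↦ s A - s Aᶜ`, and the real fundamental theorem
of calculus applies to the composition of this functional with the curve. -/
lemma ofReal_vNorm_le_add_lintegral {f g : ℝ → Ker d m}
    (hf : ∀ t ∈ Set.Ioc (0 : ℝ) 1, TVBdd (f t)) (hg : ∀ t ∈ Set.Ioc (0 : ℝ) 1, TVBdd (g t))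
    (hder : ∀ t ∈ Set.Ioc (0 : ℝ) 1, Filter.Tendsto
      (fun t' => vNorm d m fun x => (t' - t)⁻¹ • (f t' x - f t x) - g t x)
      (nhdsWithin t (Set.Ioc 0 1 \ {t})) (nhds 0))
    (hcont : ∀ t ∈ Set.Ioc (0 : ℝ) 1, Filter.Tendsto
      (fun t' => vNorm d m fun x => g t' x - g t x) (nhdsWithin t (Set.Ioc 0 1)) (nhds 0))
    {a : ℝ} (ha : a ∈ Set.Ioc (0 : ℝ) 1) :
    ENNReal.ofReal (vNorm d m (f a)) ≤
      ENNReal.ofReal (vNorm d m (f 1)) + ∫⁻ t in Set.Ioc a 1, ENNReal.ofReal (vNorm d m (g t)) := by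
  have h1 : (1 : ℝ) ∈ Set.Ioc (0 : ℝ) 1 := by simp
  have hsub : Set.Icc a 1 ⊆ Set.Ioc (0 : ℝ) 1 := fun t ht => ⟨ha.1.trans_le ht.1, ht.2⟩
  suffices H : ∀ x, ENNReal.ofReal (tvNorm (f a x)) ≤ ENNReal.ofReal (vNorm d m (f 1)) +
      ∫⁻ t in Set.Ioc a 1, ENNReal.ofReal (vNorm d m (g t)) by
    set R := ENNReal.ofReal (vNorm d m (f 1)) +
      ∫⁻ t in Set.Ioc a 1, ENNReal.ofReal (vNorm d m (g t))
    rcases eq_or_ne R ∞ with hR | hR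
    · rw [hR]; exact le_top
    · rw [ENNReal.ofReal_le_iff_le_toReal hR]
      exact ciSup_le fun x => (ENNReal.ofReal_le_iff_le_toReal hR).1 (H x)
  intro x
  obtain ⟨A, hA, hAx⟩ := exists_apply_sub_apply_compl_eq (f a x)
  set φ : ℝ → ℝ := fun t => f t x A - f t x Aᶜ with hφ
  set ψ : ℝ → ℝ := fun t => g t x A - g t x Aᶜ with hψ
  have hder' : ∀ t ∈ Set.Ioc (0 : ℝ) 1, HasDerivWithinAt φ (ψ t) (Set.Ioc 0 1) t := by
    intro t ht
    rw [hasDerivWithinAt_iff_tendsto_slope, tendsto_iff_norm_sub_tendsto_zero]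
    refine squeeze_zero' (Filter.Eventually.of_forall fun _ => norm_nonneg _) ?_ (hder t ht)
    filter_upwards [self_mem_nhdsWithin] with t' ht'
    have hb : TVBdd fun x => (t' - t)⁻¹ • (f t' x - f t x) - g t x :=
      TVBdd.sub (((hf t' ht'.1).sub (hf t ht)).smul _) (hg t ht)
    refine le_trans (le_of_eq ?_) ((abs_apply_sub_apply_compl_le _ hA).trans (hb.tvNorm_le x))
    rw [Real.norm_eq_abs]
    congr 1
    simp only [slope_def_module, hφ, hψ, sub_apply, smul_apply,
      smul_eq_mul]
    ring
  have hψcont : ContinuousOn ψ (Set.Ioc 0 1) := by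
    intro t ht
    rw [ContinuousWithinAt, tendsto_iff_norm_sub_tendsto_zero]
    refine squeeze_zero' (Filter.Eventually.of_forall fun _ => norm_nonneg _) ?_ (hcont t ht)
    filter_upwards [self_mem_nhdsWithin] with t' ht'
    refine le_trans (le_of_eq ?_) ((abs_apply_sub_apply_compl_le _ hA).trans
      (((hg t' ht').sub (hg t ht)).tvNorm_le x))
    rw [Real.norm_eq_abs]
    congr 1
    simp only [hψ, sub_apply]
    ring
  have hftc : ∫ t in a..1, ψ t = φ 1 - φ a := by
    refine intervalIntegral.integral_eq_sub_of_hasDerivAt_of_le ha.2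
      (fun t ht => (hder' t (hsub ht)).continuousWithinAt.mono hsub) (fun t ht => ?_) ?_
    · exact (hder' t (hsub ⟨ht.1.le, ht.2.le⟩)).hasDerivAt
        (Ioc_mem_nhds (ha.1.trans ht.1) ht.2)
    · refine ContinuousOn.intervalIntegrable ?_
      rw [Set.uIcc_of_le ha.2]
      exact hψcont.mono hsub
  calc ENNReal.ofReal (tvNorm (f a x))
      = ENNReal.ofReal (φ a) := by rw [← hAx]
    _ ≤ ‖φ a‖ₑ := Real.ofReal_le_enorm _
    _ = ‖φ 1 - ∫ t in a..1, ψ t‖ₑ := by rw [hftc]; congr 1; ring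
    _ ≤ ‖φ 1‖ₑ + ‖∫ t in a..1, ψ t‖ₑ := enorm_sub_le
    _ ≤ _ := by
        gcongr ?_ + ?_
        · rw [← ofReal_norm]
          exact ENNReal.ofReal_le_ofReal
            ((abs_apply_sub_apply_compl_le _ hA).trans ((hf 1 h1).tvNorm_le x))
        · rw [intervalIntegral.integral_of_le ha.2]
          refine (enorm_integral_le_lintegral_enorm _).trans ?_
          refine setLIntegral_mono' measurableSet_Ioc fun t ht => ?_
          rw [← ofReal_norm]
          exact ENNReal.ofReal_le_ofReal
            ((abs_apply_sub_apply_compl_le _ hA).trans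
              ((hg t (hsub ⟨ht.1.le, ht.2⟩)).tvNorm_le x))

end Kernel

/-! ### Moments of integrals -/

section Moments

/-- Jensen's inequality for a positive finite weight `w`, obtained from Hölder's inequality with
exponents `1/n` and `1 - 1/n` applied to `F = ((F / w)^n w)^(1/n) w^(1-1/n)`. -/
lemma lintegral_pow_le_weighted {ι : Type} [MeasurableSpace ι] (ν : Measure ι) {n : ℕ} (hn : 0 < n)
    {w F : ι → ℝ≥0∞} (hw : Measurable w) (hF : Measurable F)
    (hw0 : ∀ t, w t ≠ 0) (hwt : ∀ t, w t ≠ ∞) :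
    (∫⁻ t, F t ∂ν) ^ n ≤ (∫⁻ t, w t ∂ν) ^ (n - 1) * ∫⁻ t, (F t / w t) ^ n * w t ∂ν := by
  have hn' : (n : ℝ) ≠ 0 := by positivity
  have h1n : (1 : ℝ) ≤ n := by exact_mod_cast hn
  have hp : (0 : ℝ) ≤ 1 / n := by positivity
  have hq : (0 : ℝ) ≤ 1 - 1 / n := by
    rw [sub_nonneg, div_le_one (by positivity)]; exact h1n
  have key := ENNReal.lintegral_mul_norm_pow_le (μ := ν)
    (f := fun t => (F t / w t) ^ n * w t) (g := w) (by fun_prop) hw.aemeasurable hp hq (by ring)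
  have hfun : ∀ t, ((F t / w t) ^ n * w t) ^ (1 / n : ℝ) * w t ^ (1 - 1 / n : ℝ) = F t := by
    intro t
    rw [ENNReal.mul_rpow_of_nonneg _ _ hp, mul_assoc, ← ENNReal.rpow_add _ _ (hw0 t) (hwt t),
      ← ENNReal.rpow_natCast, ← ENNReal.rpow_mul]
    rw [mul_one_div_cancel hn', add_sub_cancel, ENNReal.rpow_one, ENNReal.rpow_one,
      ENNReal.div_mul_cancel (hw0 t) (hwt t)]
  simp only [hfun] at key
  calc (∫⁻ t, F t ∂ν) ^ n
      ≤ ((∫⁻ t, (F t / w t) ^ n * w t ∂ν) ^ (1 / n : ℝ) * (∫⁻ t, w t ∂ν) ^ (1 - 1 / n : ℝ)) ^ n := by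
        gcongr
    _ = _ := by
        rw [mul_pow, ← ENNReal.rpow_natCast, ← ENNReal.rpow_mul, ← ENNReal.rpow_natCast,
          ← ENNReal.rpow_mul, one_div_mul_cancel hn', ENNReal.rpow_one, mul_comm]
        congr 1
        rw [← ENNReal.rpow_natCast]
        congr 1
        rw [Nat.cast_sub hn]
        field_simp
        simp

/-- A random function with measurable marginals and almost surely continuous paths agrees almost
surely with a jointly measurable one: set it to zero on a measurable null set containing all the
discontinuous paths. -/
lemma exists_measurable_version {Ω ι : Type} [MeasurableSpace Ω] (P : Measure Ω)
    [TopologicalSpace ι] [TopologicalSpace.MetrizableSpace ι] [SecondCountableTopology ι]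
    [MeasurableSpace ι] [BorelSpace ι] {F : Ω → ι → ℝ≥0∞}
    (hFc : ∀ᵐ ω ∂P, Continuous (F ω)) (hFm : ∀ t, Measurable fun ω => F ω t) :
    ∃ G : Ω → ι → ℝ≥0∞, (Measurable fun p : Ω × ι => G p.1 p.2) ∧ ∀ᵐ ω ∂P, G ω = F ω := by
  classical
  obtain ⟨N, hsub, hNm, hN0⟩ := exists_measurable_superset_of_null (ae_iff.1 hFc)
  let G : Ω → ι → ℝ≥0∞ := fun ω t => if ω ∈ N then 0 else F ω t
  have hGc : ∀ ω, Continuous (G ω) := by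
    intro ω
    by_cases h : ω ∈ N
    · simp only [G, h, if_true]; exact continuous_const
    · simp only [G, h, if_false]
      by_contra hc
      exact h (hsub hc)
  have hGm : ∀ t, Measurable fun ω => G ω t := fun t =>
    Measurable.ite hNm measurable_const (hFm t)
  have hGu : Measurable (Function.uncurry fun (t : ι) (ω : Ω) => G ω t) :=
    measurable_uncurry_of_continuous_of_measurable hGc hGm
  refine ⟨G, hGu.comp measurable_swap, ?_⟩
  have : ∀ᵐ ω ∂P, ω ∉ N := by rw [ae_iff]; simpa using hN0
  filter_upwards [this] with ω hω
  funext t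
  simp [G, hω]

lemma aemeasurable_lintegral {Ω ι : Type} [MeasurableSpace Ω] (P : Measure Ω)
    [TopologicalSpace ι] [TopologicalSpace.MetrizableSpace ι] [SecondCountableTopology ι]
    [MeasurableSpace ι] [BorelSpace ι] (ν : Measure ι) [SFinite ν] {F : Ω → ι → ℝ≥0∞}
    (hFc : ∀ᵐ ω ∂P, Continuous (F ω)) (hFm : ∀ t, Measurable fun ω => F ω t) :
    AEMeasurable (fun ω => ∫⁻ t, F ω t ∂ν) P := by
  obtain ⟨G, hG, hGF⟩ := exists_measurable_version P hFc hFm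
  refine ⟨fun ω => ∫⁻ t, G ω t ∂ν, hG.lintegral_prod_right', ?_⟩
  filter_upwards [hGF] with ω hω
  rw [hω]

/-- Minkowski's integral inequality in the form `E (∫ F)^n ≤ C (∫ w)^n` when `E F(t)^n ≤ C w(t)^n`.
The continuity of `F` in `t` supplies the joint measurability used by Tonelli's theorem. -/
lemma lintegral_lintegral_pow_le {Ω ι : Type} [MeasurableSpace Ω] (P : Measure Ω) [SFinite P]
    [TopologicalSpace ι] [TopologicalSpace.MetrizableSpace ι] [SecondCountableTopology ι]
    [MeasurableSpace ι] [BorelSpace ι] (ν : Measure ι) [SFinite ν] {n : ℕ} (hn : 0 < n)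
    {w : ι → ℝ≥0∞} (hw : Measurable w) (hw0 : ∀ t, w t ≠ 0) (hwt : ∀ t, w t ≠ ∞)
    {F : Ω → ι → ℝ≥0∞} (hFc : ∀ᵐ ω ∂P, Continuous (F ω)) (hFm : ∀ t, Measurable fun ω => F ω t)
    {C : ℝ≥0∞} (hC : ∀ t, ∫⁻ ω, F ω t ^ n ∂P ≤ C * w t ^ n) :
    ∫⁻ ω, (∫⁻ t, F ω t ∂ν) ^ n ∂P ≤ C * (∫⁻ t, w t ∂ν) ^ n := by
  obtain ⟨G, hGu', hGF⟩ := exists_measurable_version P hFc hFm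
  have hGm : ∀ t, Measurable fun ω => G ω t := fun t => hGu'.comp measurable_prodMk_right
  calc ∫⁻ ω, (∫⁻ t, F ω t ∂ν) ^ n ∂P
      = ∫⁻ ω, (∫⁻ t, G ω t ∂ν) ^ n ∂P :=
        lintegral_congr_ae (by filter_upwards [hGF] with ω hω; rw [hω])
    _ ≤ ∫⁻ ω, (∫⁻ t, w t ∂ν) ^ (n - 1) * ∫⁻ t, (G ω t / w t) ^ n * w t ∂ν ∂P :=
        lintegral_mono fun ω =>
          lintegral_pow_le_weighted ν hn hw (hGu'.comp measurable_prodMk_left) hw0 hwt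
    _ = (∫⁻ t, w t ∂ν) ^ (n - 1) * ∫⁻ ω, ∫⁻ t, (G ω t / w t) ^ n * w t ∂ν ∂P := by
        refine lintegral_const_mul _ (Measurable.lintegral_prod_right' (ν := ν)
          (f := fun p : Ω × ι => (G p.1 p.2 / w p.2) ^ n * w p.2) ?_)
        fun_prop
    _ = (∫⁻ t, w t ∂ν) ^ (n - 1) * ∫⁻ t, ∫⁻ ω, (G ω t / w t) ^ n * w t ∂P ∂ν := by
        rw [lintegral_lintegral_swap]
        refine Measurable.aemeasurable ?_
        change Measurable fun p : Ω × ι => (G p.1 p.2 / w p.2) ^ n * w p.2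
        fun_prop
    _ ≤ (∫⁻ t, w t ∂ν) ^ (n - 1) * ∫⁻ t, C * w t ∂ν := by
        gcongr with t
        calc ∫⁻ ω, (G ω t / w t) ^ n * w t ∂P
            = (∫⁻ ω, G ω t ^ n ∂P) * ((w t)⁻¹ ^ n * w t) := by
              rw [← lintegral_mul_const _ ((hGm t).pow_const n)]
              refine lintegral_congr fun ω => ?_
              rw [div_eq_mul_inv, mul_pow, mul_assoc]
          _ = (∫⁻ ω, F ω t ^ n ∂P) * ((w t)⁻¹ ^ n * w t) := by
              congr 1
              exact lintegral_congr_ae (by filter_upwards [hGF] with ω hω; rw [hω])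
          _ ≤ C * w t ^ n * ((w t)⁻¹ ^ n * w t) := by gcongr; exact hC t
          _ = C * w t := by
              rw [mul_assoc, ← mul_assoc (w t ^ n), ← mul_pow,
                ENNReal.mul_inv_cancel (hw0 t) (hwt t), one_pow, one_mul]
    _ = C * (∫⁻ t, w t ∂ν) ^ n := by
        rw [lintegral_const_mul _ hw, mul_left_comm, ← pow_succ, Nat.sub_add_cancel hn]

/-- The index interval `(0,1]` as a type. -/
abbrev I01 : Type := Set.Ioc (0 : ℝ) 1

/-- Lebesgue measure on `(0,1]`. -/
instance : MeasureSpace I01 := Measure.Subtype.measureSpace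

lemma lintegral_I01_eq (f : ℝ → ℝ≥0∞) :
    ∫⁻ t : I01, f t = ∫⁻ t in Set.Ioc (0 : ℝ) 1, f t :=
  lintegral_subtype_comap measurableSet_Ioc f

instance : IsFiniteMeasure (volume : Measure I01) := by
  refine ⟨?_⟩
  rw [← setLIntegral_one, Measure.restrict_univ, lintegral_I01_eq fun _ => 1]
  simp

/-- The weight `t^(a-1)`, whose integral over `(0,1]` is `1/a` when `a > 0`. -/
def wt (a t : ℝ) : ℝ≥0∞ := ENNReal.ofReal (t ^ (a - 1))

lemma wt_ne_zero (a : ℝ) (t : I01) : wt a t ≠ 0 := by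
  rw [wt, ne_eq, ENNReal.ofReal_eq_zero, not_le]
  exact Real.rpow_pos_of_pos t.2.1 _

lemma wt_ne_top (a t : ℝ) : wt a t ≠ ∞ := ENNReal.ofReal_ne_top

lemma measurable_wt (a : ℝ) : Measurable (wt a) := by
  unfold wt; fun_prop

lemma lintegral_wt {a : ℝ} (ha : 0 < a) : ∫⁻ t : I01, wt a t = ENNReal.ofReal (1 / a) := by
  have hi : IntervalIntegrable (fun t : ℝ => t ^ (a - 1)) volume 0 1 :=
    intervalIntegral.intervalIntegrable_rpow' (by linarith)
  rw [intervalIntegrable_iff_integrableOn_Ioc_of_le zero_le_one] at hi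
  rw [lintegral_I01_eq (wt a)]
  unfold wt
  rw [← ofReal_integral_eq_lintegral_ofReal hi, ← intervalIntegral.integral_of_le zero_le_one,
    integral_rpow (Or.inl (by linarith))]
  · simp [ha.ne']
  · filter_upwards [ae_restrict_mem measurableSet_Ioc] with t ht
    exact Real.rpow_nonneg ht.1.le _

lemma add_four_pow_le (n : ℕ) (a b c e : ℝ≥0∞) :
    (a + b + c + e) ^ n ≤ 4 ^ n * (a ^ n + b ^ n + c ^ n + e ^ n) := by
  set M := max (max a b) (max c e) with hM
  have h1 : a ≤ M := (le_max_left _ _).trans (le_max_left _ _)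
  have h2 : b ≤ M := (le_max_right _ _).trans (le_max_left _ _)
  have h3 : c ≤ M := (le_max_left _ _).trans (le_max_right _ _)
  have h4 : e ≤ M := (le_max_right _ _).trans (le_max_right _ _)
  have hMn : M ^ n ≤ a ^ n + b ^ n + c ^ n + e ^ n := by
    have : M = a ∨ M = b ∨ M = c ∨ M = e := by
      rcases max_choice (max a b) (max c e) with h | h <;>
      rcases max_choice a b with h' | h' <;> rcases max_choice c e with h'' | h'' <;>
      simp_all
    rcases this with h | h | h | h <;> rw [h]
    · rw [add_assoc, add_assoc]; exact le_self_add
    · exact (le_add_self.trans le_self_add).trans le_self_add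
    · exact le_add_self.trans le_self_add
    · exact le_add_self
  calc (a + b + c + e) ^ n ≤ (M + M + M + M) ^ n := by gcongr
    _ = 4 ^ n * M ^ n := by rw [← mul_pow]; congr 1; ring
    _ ≤ _ := by gcongr

end Moments

/-! ### The pathwise bound -/

section Pathwise

variable {d m : ℕ}

/-- The pathwise regularity assumption on `(κ,μ) ↦ z κ μ` and its partial derivatives
`zκ = ∂_κ z`, `zμ = ∂_μ z`, `zκμ = ∂_μ ∂_κ z` on `(0,1]²`, in the `𝒱^m` norm. -/
def RegularPath (z zκ zμ zκμ : ℝ → ℝ → Ker d m) : Prop :=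
  (∀ κ ∈ Set.Ioc (0 : ℝ) 1, ∀ μ ∈ Set.Ioc (0 : ℝ) 1,
    IsV d m (z κ μ) ∧ IsV d m (zκ κ μ) ∧ IsV d m (zμ κ μ) ∧ IsV d m (zκμ κ μ)) ∧
  (∀ κ ∈ Set.Ioc (0 : ℝ) 1, ∀ μ ∈ Set.Ioc (0 : ℝ) 1,
    Filter.Tendsto
      (fun κ' => vNorm d m fun x => (κ' - κ)⁻¹ • (z κ' μ x - z κ μ x) - zκ κ μ x)
      (nhdsWithin κ (Set.Ioc 0 1 \ {κ})) (nhds 0) ∧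
    Filter.Tendsto
      (fun μ' => vNorm d m fun x => (μ' - μ)⁻¹ • (z κ μ' x - z κ μ x) - zμ κ μ x)
      (nhdsWithin μ (Set.Ioc 0 1 \ {μ})) (nhds 0) ∧
    Filter.Tendsto
      (fun μ' => vNorm d m fun x => (μ' - μ)⁻¹ • (zκ κ μ' x - zκ κ μ x) - zκμ κ μ x)
      (nhdsWithin μ (Set.Ioc 0 1 \ {μ})) (nhds 0)) ∧
  (∀ κ ∈ Set.Ioc (0 : ℝ) 1, ∀ μ ∈ Set.Ioc (0 : ℝ) 1,
    Filter.Tendsto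
      (fun p : ℝ × ℝ => vNorm d m fun x => zκ p.1 p.2 x - zκ κ μ x)
      (nhdsWithin (κ, μ) (Set.Ioc 0 1 ×ˢ Set.Ioc 0 1)) (nhds 0) ∧
    Filter.Tendsto
      (fun p : ℝ × ℝ => vNorm d m fun x => zμ p.1 p.2 x - zμ κ μ x)
      (nhdsWithin (κ, μ) (Set.Ioc 0 1 ×ˢ Set.Ioc 0 1)) (nhds 0) ∧
    Filter.Tendsto
      (fun p : ℝ × ℝ => vNorm d m fun x => zκμ p.1 p.2 x - zκμ κ μ x)
      (nhdsWithin (κ, μ) (Set.Ioc 0 1 ×ˢ Set.Ioc 0 1)) (nhds 0))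

lemma continuous_vNorm_of_tendsto {g : ℝ → ℝ → Ker d m}
    (hg : ∀ κ ∈ Set.Ioc (0 : ℝ) 1, ∀ μ ∈ Set.Ioc (0 : ℝ) 1, TVBdd (g κ μ))
    (h : ∀ κ ∈ Set.Ioc (0 : ℝ) 1, ∀ μ ∈ Set.Ioc (0 : ℝ) 1, Filter.Tendsto
      (fun p : ℝ × ℝ => vNorm d m fun x => g p.1 p.2 x - g κ μ x)
      (nhdsWithin (κ, μ) (Set.Ioc 0 1 ×ˢ Set.Ioc 0 1)) (nhds 0)) :
    Continuous fun p : I01 × I01 => vNorm d m (g p.1 p.2) := by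
  have hc : ContinuousOn (fun p : ℝ × ℝ => vNorm d m (g p.1 p.2))
      (Set.Ioc (0 : ℝ) 1 ×ˢ Set.Ioc (0 : ℝ) 1) := by
    rintro ⟨κ, μ⟩ ⟨hκ, hμ⟩
    refine tendsto_vNorm ?_ (hg κ hκ μ hμ) (h κ hκ μ hμ)
    filter_upwards [self_mem_nhdsWithin] with p hp
    exact hg _ hp.1 _ hp.2
  exact hc.comp_continuous (f := fun p : I01 × I01 => ((p.1 : ℝ), (p.2 : ℝ)))
    (by fun_prop) fun p => ⟨p.1.2, p.2.2⟩

lemma tendsto_curve_fst {g : ℝ → ℝ → Ker d m} {κ μ : ℝ} (hμ : μ ∈ Set.Ioc (0 : ℝ) 1)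
    (h : Filter.Tendsto (fun p : ℝ × ℝ => vNorm d m fun x => g p.1 p.2 x - g κ μ x)
      (nhdsWithin (κ, μ) (Set.Ioc 0 1 ×ˢ Set.Ioc 0 1)) (nhds 0)) :
    Filter.Tendsto (fun κ' => vNorm d m fun x => g κ' μ x - g κ μ x)
      (nhdsWithin κ (Set.Ioc 0 1)) (nhds 0) := by
  refine h.comp (f := fun κ' : ℝ => (κ', μ))
    (tendsto_nhdsWithin_of_tendsto_nhds_of_eventually_within _ ?_ ?_)
  · exact ((Continuous.prodMk_left μ).tendsto κ).mono_left nhdsWithin_le_nhds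
  · filter_upwards [self_mem_nhdsWithin] with t ht
    exact ⟨ht, hμ⟩

lemma tendsto_curve_snd {g : ℝ → ℝ → Ker d m} {κ μ : ℝ} (hκ : κ ∈ Set.Ioc (0 : ℝ) 1)
    (h : Filter.Tendsto (fun p : ℝ × ℝ => vNorm d m fun x => g p.1 p.2 x - g κ μ x)
      (nhdsWithin (κ, μ) (Set.Ioc 0 1 ×ˢ Set.Ioc 0 1)) (nhds 0)) :
    Filter.Tendsto (fun μ' => vNorm d m fun x => g κ μ' x - g κ μ x)
      (nhdsWithin μ (Set.Ioc 0 1)) (nhds 0) := by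
  refine h.comp (f := fun μ' : ℝ => (κ, μ'))
    (tendsto_nhdsWithin_of_tendsto_nhds_of_eventually_within _ ?_ ?_)
  · exact ((Continuous.prodMk_right κ).tendsto μ).mono_left nhdsWithin_le_nhds
  · filter_upwards [self_mem_nhdsWithin] with t ht
    exact ⟨hκ, ht⟩

/-- A weight `β` with `β a ≤ 1` and `β a ≤ β t` for `t ≥ a` can be carried inside the integral over
`(a,1]`, which is then enlarged to `(0,1]`. -/
lemma ofReal_mul_le_add_lintegral {β N : ℝ → ℝ} {F₁ : ℝ} {a : ℝ} (ha : a ∈ Set.Ioc (0 : ℝ) 1)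
    (hβ0 : ∀ t ∈ Set.Ioc (0 : ℝ) 1, 0 ≤ β t) (hβ1 : β a ≤ 1)
    (hβm : ∀ t ∈ Set.Ioc a 1, β a ≤ β t) {Fa : ℝ}
    (h : ENNReal.ofReal Fa ≤ ENNReal.ofReal F₁ + ∫⁻ t in Set.Ioc a 1, ENNReal.ofReal (N t)) :
    ENNReal.ofReal (β a * Fa) ≤
      ENNReal.ofReal F₁ + ∫⁻ t : I01, ENNReal.ofReal (β t * N t) := by
  rw [lintegral_I01_eq fun t => ENNReal.ofReal (β t * N t), ENNReal.ofReal_mul (hβ0 a ha)]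
  calc ENNReal.ofReal (β a) * ENNReal.ofReal Fa
      ≤ ENNReal.ofReal (β a) *
          (ENNReal.ofReal F₁ + ∫⁻ t in Set.Ioc a 1, ENNReal.ofReal (N t)) := by gcongr
    _ = ENNReal.ofReal (β a) * ENNReal.ofReal F₁ +
          ∫⁻ t in Set.Ioc a 1, ENNReal.ofReal (β a) * ENNReal.ofReal (N t) := by
        rw [mul_add, lintegral_const_mul' _ _ ENNReal.ofReal_ne_top]
    _ ≤ _ := by
        gcongr ?_ + ?_
        · refine mul_le_of_le_one_left' ?_
          simpa using ENNReal.ofReal_le_ofReal hβ1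
        · refine (setLIntegral_mono' measurableSet_Ioc fun t ht => ?_).trans
            (lintegral_mono_set (Set.Ioc_subset_Ioc_left ha.1.le))
          rw [ENNReal.ofReal_mul (hβ0 t ⟨ha.1.trans ht.1, ht.2⟩)]
          gcongr
          exact hβm t ht

/-- The weight `[μ]^{-ρ}`. -/
def bw (σ ρ t : ℝ) : ℝ := (t ^ (1 / σ)) ^ (-ρ)

variable {σ ρ : ℝ}

lemma bw_nonneg {t : ℝ} (ht : 0 < t) : 0 ≤ bw σ ρ t :=
  Real.rpow_nonneg (Real.rpow_nonneg ht.le _) _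

lemma bw_le_one (hσ : 0 < σ) (hρ : ρ ≤ 0) {t : ℝ} (ht : t ∈ Set.Ioc (0 : ℝ) 1) : bw σ ρ t ≤ 1 :=
  Real.rpow_le_one (Real.rpow_nonneg ht.1.le _)
    (Real.rpow_le_one ht.1.le ht.2 (by positivity)) (by linarith)

lemma bw_mono (hσ : 0 < σ) (hρ : ρ ≤ 0) {s t : ℝ} (hs : 0 < s) (hst : s ≤ t) :
    bw σ ρ s ≤ bw σ ρ t :=
  Real.rpow_le_rpow (Real.rpow_nonneg hs.le _)
    (Real.rpow_le_rpow hs.le hst (by positivity)) (by linarith)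

lemma continuous_bw (hσ : 0 < σ) (hρ : ρ ≤ 0) : Continuous (bw σ ρ) :=
  (continuous_id.rpow_const fun _ => Or.inr (by positivity)).rpow_const
    fun _ => Or.inr (by linarith)

variable {z zκ zμ zκμ : ℝ → ℝ → Ker d m}

/-- Two applications of the fundamental theorem of calculus bound the weighted norm at an arbitrary
`(κ,μ)` by a sum of four terms that do not depend on `(κ,μ)`. -/
lemma RegularPath.ofReal_bw_mul_vNorm_le (h : RegularPath z zκ zμ zκμ) (hσ : 0 < σ) (hρ : ρ ≤ 0)
    {κ μ : ℝ} (hκ : κ ∈ Set.Ioc (0 : ℝ) 1) (hμ : μ ∈ Set.Ioc (0 : ℝ) 1) :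
    ENNReal.ofReal (bw σ ρ μ * vNorm d m (z κ μ)) ≤
      ENNReal.ofReal (vNorm d m (z 1 1)) +
      (∫⁻ s : I01, ENNReal.ofReal (bw σ ρ s * vNorm d m (zμ 1 s))) +
      (∫⁻ r : I01, ENNReal.ofReal (vNorm d m (zκ r 1))) +
      ∫⁻ p : I01 × I01, ENNReal.ofReal (bw σ ρ p.2 * vNorm d m (zκμ p.1 p.2)) := by
  obtain ⟨hV, hD, hC⟩ := h
  have h1 : (1 : ℝ) ∈ Set.Ioc (0 : ℝ) 1 := by simp
  -- the weighted bound along a curve in the variable `μ`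
  have hw : ∀ {Fa F₁ : ℝ} {N : ℝ → ℝ}, ENNReal.ofReal Fa ≤ ENNReal.ofReal F₁ +
        ∫⁻ t in Set.Ioc μ 1, ENNReal.ofReal (N t) →
      ENNReal.ofReal (bw σ ρ μ * Fa) ≤
        ENNReal.ofReal F₁ + ∫⁻ t : I01, ENNReal.ofReal (bw σ ρ t * N t) := fun H =>
    ofReal_mul_le_add_lintegral hμ (fun t ht => bw_nonneg ht.1) (bw_le_one hσ hρ hμ)
      (fun t ht => bw_mono hσ hρ hμ.1 ht.1.le) H
  have e1 : ENNReal.ofReal (vNorm d m (z κ μ)) ≤ ENNReal.ofReal (vNorm d m (z 1 μ)) +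
      ∫⁻ r in Set.Ioc κ 1, ENNReal.ofReal (vNorm d m (zκ r μ)) :=
    ofReal_vNorm_le_add_lintegral (f := fun r => z r μ) (g := fun r => zκ r μ)
      (fun t ht => (hV t ht μ hμ).1.bdd) (fun t ht => (hV t ht μ hμ).2.1.bdd)
      (fun t ht => (hD t ht μ hμ).1) (fun t ht => tendsto_curve_fst hμ (hC t ht μ hμ).1) hκ
  have e2 : ENNReal.ofReal (bw σ ρ μ * vNorm d m (z 1 μ)) ≤ ENNReal.ofReal (vNorm d m (z 1 1)) +
      ∫⁻ s : I01, ENNReal.ofReal (bw σ ρ s * vNorm d m (zμ 1 s)) :=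
    hw <| ofReal_vNorm_le_add_lintegral (f := fun s => z 1 s) (g := fun s => zμ 1 s)
      (fun t ht => (hV 1 h1 t ht).1.bdd) (fun t ht => (hV 1 h1 t ht).2.2.1.bdd)
      (fun t ht => (hD 1 h1 t ht).2.1) (fun t ht => tendsto_curve_snd h1 (hC 1 h1 t ht).2.1) hμ
  have e3 : ∀ r ∈ Set.Ioc (0 : ℝ) 1, ENNReal.ofReal (bw σ ρ μ * vNorm d m (zκ r μ)) ≤
      ENNReal.ofReal (vNorm d m (zκ r 1)) +
        ∫⁻ s : I01, ENNReal.ofReal (bw σ ρ s * vNorm d m (zκμ r s)) := fun r hr =>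
    hw <| ofReal_vNorm_le_add_lintegral (f := fun s => zκ r s) (g := fun s => zκμ r s)
      (fun t ht => (hV r hr t ht).2.1.bdd) (fun t ht => (hV r hr t ht).2.2.2.bdd)
      (fun t ht => (hD r hr t ht).2.2) (fun t ht => tendsto_curve_snd hr (hC r hr t ht).2.2) hμ
  have cκ := continuous_vNorm_of_tendsto (fun κ hκ μ hμ => (hV κ hκ μ hμ).2.1.bdd)
    (fun κ hκ μ hμ => (hC κ hκ μ hμ).1)
  have cκμ := continuous_vNorm_of_tendsto (fun κ hκ μ hμ => (hV κ hκ μ hμ).2.2.2.bdd)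
    (fun κ hκ μ hμ => (hC κ hκ μ hμ).2.2)
  have cκ1 : Continuous fun r : I01 => ENNReal.ofReal (vNorm d m (zκ r 1)) := by
    have hi : Continuous fun r : I01 => (r, (⟨1, h1⟩ : I01)) := by fun_prop
    have := cκ.comp hi
    exact ENNReal.continuous_ofReal.comp this
  have cD : Continuous fun p : I01 × I01 =>
      ENNReal.ofReal (bw σ ρ p.2 * vNorm d m (zκμ p.1 p.2)) := by
    have hb : Continuous fun p : I01 × I01 => bw σ ρ p.2 :=
      (continuous_bw hσ hρ).comp (by fun_prop)
    exact ENNReal.continuous_ofReal.comp (hb.mul cκμ)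
  rw [Measure.volume_eq_prod, lintegral_prod _ cD.measurable.aemeasurable, add_assoc,
    ← lintegral_add_left cκ1.measurable]
  calc ENNReal.ofReal (bw σ ρ μ * vNorm d m (z κ μ))
      = ENNReal.ofReal (bw σ ρ μ) * ENNReal.ofReal (vNorm d m (z κ μ)) :=
        ENNReal.ofReal_mul (bw_nonneg hμ.1)
    _ ≤ ENNReal.ofReal (bw σ ρ μ) * (ENNReal.ofReal (vNorm d m (z 1 μ)) +
          ∫⁻ r in Set.Ioc κ 1, ENNReal.ofReal (vNorm d m (zκ r μ))) := by gcongr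
    _ ≤ ENNReal.ofReal (bw σ ρ μ) * (ENNReal.ofReal (vNorm d m (z 1 μ)) +
          ∫⁻ r : I01, ENNReal.ofReal (vNorm d m (zκ r μ))) := by
        rw [lintegral_I01_eq fun r => ENNReal.ofReal (vNorm d m (zκ r μ))]
        gcongr
        exact hκ.1.le
    _ = ENNReal.ofReal (bw σ ρ μ * vNorm d m (z 1 μ)) +
          ∫⁻ r : I01, ENNReal.ofReal (bw σ ρ μ * vNorm d m (zκ r μ)) := by
        rw [mul_add, ← lintegral_const_mul' _ _ ENNReal.ofReal_ne_top]
        simp only [ENNReal.ofReal_mul (bw_nonneg (σ := σ) (ρ := ρ) hμ.1)]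
    _ ≤ _ := by
        gcongr ?_ + ?_
        exact lintegral_mono fun r => e3 r r.2

end Pathwise

/-! ### Scaling of the moment bounds -/

section Scaling

lemma rpow_scale {σ ε t : ℝ} (hσ : 0 < σ) (ht : 0 < t) (n : ℕ) :
    (t ^ (1 / σ)) ^ ((n : ℝ) * (ε - σ)) = (t ^ (ε / σ - 1)) ^ n := by
  rw [← Real.rpow_mul ht.le, ← Real.rpow_natCast, ← Real.rpow_mul ht.le]
  congr 1
  field_simp

lemma bw_pow_mul {σ ρ t y : ℝ} (ht : 0 < t) (n : ℕ) :
    bw σ ρ t ^ n * (t ^ (1 / σ)) ^ ((n : ℝ) * (ρ + y)) = (t ^ (1 / σ)) ^ ((n : ℝ) * y) := by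
  have hp : 0 < t ^ (1 / σ) := Real.rpow_pos_of_pos ht _
  rw [bw, ← Real.rpow_natCast, ← Real.rpow_mul hp.le, ← Real.rpow_add hp]
  congr 1
  ring

lemma lintegral_ofReal_mul_pow_le {Ω : Type} [MeasurableSpace Ω] {P : Measure Ω} {n : ℕ}
    {X : Ω → ℝ} {b K : ℝ} (hb : 0 ≤ b)
    (h : ∫⁻ ω, ENNReal.ofReal (X ω) ^ n ∂P ≤ ENNReal.ofReal K) :
    ∫⁻ ω, ENNReal.ofReal (b * X ω) ^ n ∂P ≤ ENNReal.ofReal (b ^ n * K) := by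
  simp only [ENNReal.ofReal_mul hb, mul_pow]
  rw [lintegral_const_mul' _ _ (ENNReal.pow_ne_top ENNReal.ofReal_ne_top),
    ENNReal.ofReal_mul (pow_nonneg hb n), ENNReal.ofReal_pow hb]
  gcongr

lemma ofReal_mul_pow_eq_wt {C a t : ℝ} (hC : 0 < C) (ht : 0 < t) (n : ℕ) :
    ENNReal.ofReal (C * (t ^ (a - 1)) ^ n) = ENNReal.ofReal C * wt a t ^ n := by
  rw [ENNReal.ofReal_mul hC.le, ENNReal.ofReal_pow (Real.rpow_nonneg ht.le _), wt]

end Scaling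

/-- Pathwise supremum bound from moment bounds on derivatives
(Kolmogorov-type argument in the scale parameters).  The random function
`(κ,μ) ↦ ζ_{κ,μ} ∈ 𝒱^m` comes together with its partial derivatives `ζκ = ∂_κζ`,
`ζμ = ∂_μζ` and the mixed derivative `ζκμ = ∂_μ∂_κζ` (differentiability and continuity
being understood with respect to the `𝒱^m` norm, almost surely); if the `n`-th moments of
the `𝒱^m` norms of these four families satisfy the stated bounds with constant `C`, then
`𝔼(sup_{κ,μ∈(0,1]} [μ]^{-nρ}‖ζ_{κ,μ}‖^n) ≤ c·C`, where `c` depends only on `n`, `σ`, `ε`. -/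
theorem stmt14 (n : ℕ) (hn : 0 < n) (σ ε : ℝ) (hσ : 0 < σ) (hε : 0 < ε) :
    ∃ c : ℝ, 0 < c ∧
      ∀ (d m : ℕ), 0 < d → ∀ ρ : ℝ, ρ ≤ 0 →
      ∀ (Ω : Type) (_ : MeasureSpace Ω), IsProbabilityMeasure (volume : Measure Ω) →
      ∀ ζ ζκ ζμ ζκμ : Ω → ℝ → ℝ → Ker d m,
      -- almost surely, `ζ` is continuously differentiable in `κ` and `μ` with continuous
      -- mixed second derivative, in the `𝒱^m` norm, and takes values in `𝒱^m`:
      (∀ᵐ ω,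
        (∀ κ ∈ Set.Ioc (0 : ℝ) 1, ∀ μ ∈ Set.Ioc (0 : ℝ) 1,
          IsV d m (ζ ω κ μ) ∧ IsV d m (ζκ ω κ μ) ∧ IsV d m (ζμ ω κ μ) ∧
            IsV d m (ζκμ ω κ μ)) ∧
        (∀ κ ∈ Set.Ioc (0 : ℝ) 1, ∀ μ ∈ Set.Ioc (0 : ℝ) 1,
          Filter.Tendsto
            (fun κ' => vNorm d m fun x =>
              (κ' - κ)⁻¹ • (ζ ω κ' μ x - ζ ω κ μ x) - ζκ ω κ μ x)
            (nhdsWithin κ (Set.Ioc 0 1 \ {κ})) (nhds 0) ∧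
          Filter.Tendsto
            (fun μ' => vNorm d m fun x =>
              (μ' - μ)⁻¹ • (ζ ω κ μ' x - ζ ω κ μ x) - ζμ ω κ μ x)
            (nhdsWithin μ (Set.Ioc 0 1 \ {μ})) (nhds 0) ∧
          Filter.Tendsto
            (fun μ' => vNorm d m fun x =>
              (μ' - μ)⁻¹ • (ζκ ω κ μ' x - ζκ ω κ μ x) - ζκμ ω κ μ x)
            (nhdsWithin μ (Set.Ioc 0 1 \ {μ})) (nhds 0)) ∧
        (∀ κ ∈ Set.Ioc (0 : ℝ) 1, ∀ μ ∈ Set.Ioc (0 : ℝ) 1,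
          Filter.Tendsto
            (fun p : ℝ × ℝ => vNorm d m fun x => ζκ ω p.1 p.2 x - ζκ ω κ μ x)
            (nhdsWithin (κ, μ) (Set.Ioc 0 1 ×ˢ Set.Ioc 0 1)) (nhds 0) ∧
          Filter.Tendsto
            (fun p : ℝ × ℝ => vNorm d m fun x => ζμ ω p.1 p.2 x - ζμ ω κ μ x)
            (nhdsWithin (κ, μ) (Set.Ioc 0 1 ×ˢ Set.Ioc 0 1)) (nhds 0) ∧
          Filter.Tendsto
            (fun p : ℝ × ℝ => vNorm d m fun x => ζκμ ω p.1 p.2 x - ζκμ ω κ μ x)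
            (nhdsWithin (κ, μ) (Set.Ioc 0 1 ×ˢ Set.Ioc 0 1)) (nhds 0))) →
      -- the `𝒱^m` norms are measurable in `ω`:
      (∀ κ ∈ Set.Ioc (0 : ℝ) 1, ∀ μ ∈ Set.Ioc (0 : ℝ) 1,
        Measurable (fun ω => vNorm d m (ζ ω κ μ)) ∧
        Measurable (fun ω => vNorm d m (ζκ ω κ μ)) ∧
        Measurable (fun ω => vNorm d m (ζμ ω κ μ)) ∧
        Measurable (fun ω => vNorm d m (ζκμ ω κ μ))) →
      -- the moment bounds `𝔼‖∂_μ^s∂_κ^rζ_{κ,μ}‖^n ≤ C·[κ]^{n(ε-σ)r}·[μ]^{n(ρ+(ε-σ)s)}`: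
      ∀ C : ℝ, 0 < C →
      (∀ κ ∈ Set.Ioc (0 : ℝ) 1, ∀ μ ∈ Set.Ioc (0 : ℝ) 1,
        (∫⁻ ω, (ENNReal.ofReal (vNorm d m (ζ ω κ μ))) ^ n)
          ≤ ENNReal.ofReal (C * (μ ^ (1 / σ)) ^ ((n : ℝ) * ρ)) ∧
        (∫⁻ ω, (ENNReal.ofReal (vNorm d m (ζκ ω κ μ))) ^ n)
          ≤ ENNReal.ofReal
              (C * (κ ^ (1 / σ)) ^ ((n : ℝ) * (ε - σ)) * (μ ^ (1 / σ)) ^ ((n : ℝ) * ρ)) ∧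
        (∫⁻ ω, (ENNReal.ofReal (vNorm d m (ζμ ω κ μ))) ^ n)
          ≤ ENNReal.ofReal (C * (μ ^ (1 / σ)) ^ ((n : ℝ) * (ρ + (ε - σ)))) ∧
        (∫⁻ ω, (ENNReal.ofReal (vNorm d m (ζκμ ω κ μ))) ^ n)
          ≤ ENNReal.ofReal
              (C * (κ ^ (1 / σ)) ^ ((n : ℝ) * (ε - σ)) *
                (μ ^ (1 / σ)) ^ ((n : ℝ) * (ρ + (ε - σ))))) →
      -- conclusion:
      (∫⁻ ω, ⨆ κ ∈ Set.Ioc (0 : ℝ) 1, ⨆ μ ∈ Set.Ioc (0 : ℝ) 1,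
          (ENNReal.ofReal ((μ ^ (1 / σ)) ^ (-ρ) * vNorm d m (ζ ω κ μ))) ^ n)
        ≤ ENNReal.ofReal (c * C) := by
  set a : ℝ := ε / σ
  have ha : 0 < a := div_pos hε hσ
  refine ⟨4 ^ n * (1 + (1 / a) ^ n + (1 / a) ^ n + (1 / a * (1 / a)) ^ n), by positivity, ?_⟩
  intro d m _ ρ hρ Ω _ _ ζ ζκ ζμ ζκμ hreg hmeas C hC hmom
  have hreg' : ∀ᵐ ω, RegularPath (ζ ω) (ζκ ω) (ζμ ω) (ζκμ ω) := hreg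
  have h1 : (1 : ℝ) ∈ Set.Ioc (0 : ℝ) 1 := by simp
  let e : I01 := ⟨1, h1⟩
  -- the four terms of the pathwise bound; the last three are integrals of `FB`, `FK`, `FD`
  let A : Ω → ℝ≥0∞ := fun ω => ENNReal.ofReal (vNorm d m (ζ ω 1 1))
  let FB : Ω → I01 → ℝ≥0∞ := fun ω s => ENNReal.ofReal (bw σ ρ s * vNorm d m (ζμ ω 1 s))
  let FK : Ω → I01 → ℝ≥0∞ := fun ω r => ENNReal.ofReal (vNorm d m (ζκ ω r 1))
  let FD : Ω → I01 × I01 → ℝ≥0∞ := fun ω p =>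
    ENNReal.ofReal (bw σ ρ p.2 * vNorm d m (ζκμ ω p.1 p.2))
  have hbw1 : Continuous fun s : I01 => bw σ ρ s :=
    (continuous_bw hσ hρ).comp continuous_subtype_val
  have hbw2 : Continuous fun p : I01 × I01 => bw σ ρ p.2 := hbw1.comp continuous_snd
  have cB : ∀ᵐ ω, Continuous (FB ω) := by
    filter_upwards [hreg'] with ω h
    have c := continuous_vNorm_of_tendsto (fun κ hκ μ hμ => (h.1 κ hκ μ hμ).2.2.1.bdd)
      (fun κ hκ μ hμ => (h.2.2 κ hκ μ hμ).2.1)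
    have hi : Continuous fun s : I01 => (e, s) := by fun_prop
    have c1 := c.comp hi
    exact ENNReal.continuous_ofReal.comp (hbw1.mul c1)
  have cK : ∀ᵐ ω, Continuous (FK ω) := by
    filter_upwards [hreg'] with ω h
    have c := continuous_vNorm_of_tendsto (fun κ hκ μ hμ => (h.1 κ hκ μ hμ).2.1.bdd)
      (fun κ hκ μ hμ => (h.2.2 κ hκ μ hμ).1)
    have hi : Continuous fun r : I01 => (r, e) := by fun_prop
    have c1 := c.comp hi
    exact ENNReal.continuous_ofReal.comp c1
  have cD : ∀ᵐ ω, Continuous (FD ω) := by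
    filter_upwards [hreg'] with ω h
    have c := continuous_vNorm_of_tendsto (fun κ hκ μ hμ => (h.1 κ hκ μ hμ).2.2.2.bdd)
      (fun κ hκ μ hμ => (h.2.2 κ hκ μ hμ).2.2)
    exact ENNReal.continuous_ofReal.comp (hbw2.mul c)
  have mA : Measurable A := (hmeas 1 h1 1 h1).1.ennreal_ofReal
  have mB : ∀ s, Measurable fun ω => FB ω s := fun s =>
    ((hmeas 1 h1 s s.2).2.2.1.const_mul _).ennreal_ofReal
  have mK : ∀ r, Measurable fun ω => FK ω r := fun r => (hmeas r r.2 1 h1).2.1.ennreal_ofReal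
  have mD : ∀ p, Measurable fun ω => FD ω p := fun p =>
    ((hmeas p.1 p.1.2 p.2 p.2.2).2.2.2.const_mul _).ennreal_ofReal
  have iA : ∫⁻ ω, A ω ^ n ≤ ENNReal.ofReal C := by
    simpa using (hmom 1 h1 1 h1).1
  have iB : ∫⁻ ω, (∫⁻ s, FB ω s) ^ n ≤ ENNReal.ofReal C * ENNReal.ofReal (1 / a) ^ n := by
    rw [← lintegral_wt ha]
    refine lintegral_lintegral_pow_le (w := fun s : I01 => wt a s) volume volume hn
      ((measurable_wt a).comp measurable_subtype_coe) (wt_ne_zero a) (fun s => wt_ne_top a s)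
      cB mB fun s => ?_
    have hs := s.2.1
    rw [← ofReal_mul_pow_eq_wt hC hs]
    refine (lintegral_ofReal_mul_pow_le (bw_nonneg hs) (hmom 1 h1 s s.2).2.2.1).trans_eq ?_
    rw [mul_left_comm, bw_pow_mul hs, rpow_scale hσ hs]
  have iK : ∫⁻ ω, (∫⁻ r, FK ω r) ^ n ≤ ENNReal.ofReal C * ENNReal.ofReal (1 / a) ^ n := by
    rw [← lintegral_wt ha]
    refine lintegral_lintegral_pow_le (w := fun s : I01 => wt a s) volume volume hn
      ((measurable_wt a).comp measurable_subtype_coe) (wt_ne_zero a) (fun s => wt_ne_top a s)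
      cK mK fun r => ?_
    have hr := r.2.1
    rw [← ofReal_mul_pow_eq_wt hC hr]
    refine (hmom r r.2 1 h1).2.1.trans_eq ?_
    rw [rpow_scale hσ hr, Real.one_rpow, Real.one_rpow, mul_one]
  have iD : ∫⁻ ω, (∫⁻ p, FD ω p) ^ n ≤
      ENNReal.ofReal C * (ENNReal.ofReal (1 / a) * ENNReal.ofReal (1 / a)) ^ n := by
    have mw : Measurable fun s : I01 => wt a s := (measurable_wt a).comp measurable_subtype_coe
    have hI : ∫⁻ p : I01 × I01, wt a p.1 * wt a p.2 =
        ENNReal.ofReal (1 / a) * ENNReal.ofReal (1 / a) := by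
      rw [Measure.volume_eq_prod, lintegral_prod_mul mw.aemeasurable mw.aemeasurable,
        lintegral_wt ha]
    rw [← hI]
    refine lintegral_lintegral_pow_le (w := fun p : I01 × I01 => wt a p.1 * wt a p.2)
      volume volume hn ((mw.comp measurable_fst).mul (mw.comp measurable_snd))
      (fun p => mul_ne_zero (wt_ne_zero a _) (wt_ne_zero a _))
      (fun p => ENNReal.mul_ne_top (wt_ne_top a _) (wt_ne_top a _)) cD mD fun p => ?_
    have hr := p.1.2.1
    have hs := p.2.2.1
    have hK : 0 < C * ((p.1 : ℝ) ^ (a - 1)) ^ n :=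
      mul_pos hC (pow_pos (Real.rpow_pos_of_pos hr _) n)
    rw [mul_pow, ← mul_assoc, ← ofReal_mul_pow_eq_wt hC hr, ← ofReal_mul_pow_eq_wt hK hs]
    refine (lintegral_ofReal_mul_pow_le (bw_nonneg hs)
      (hmom p.1 p.1.2 p.2 p.2.2).2.2.2).trans_eq ?_
    rw [mul_left_comm, bw_pow_mul hs, rpow_scale hσ hs, rpow_scale hσ hr]
  have hmain : ∀ᵐ ω, (⨆ κ ∈ Set.Ioc (0 : ℝ) 1, ⨆ μ ∈ Set.Ioc (0 : ℝ) 1,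
      (ENNReal.ofReal ((μ ^ (1 / σ)) ^ (-ρ) * vNorm d m (ζ ω κ μ))) ^ n) ≤
      4 ^ n * (A ω ^ n + (∫⁻ s, FB ω s) ^ n + (∫⁻ r, FK ω r) ^ n + (∫⁻ p, FD ω p) ^ n) := by
    filter_upwards [hreg'] with ω h
    refine iSup₂_le fun κ hκ => iSup₂_le fun μ hμ => ?_
    exact (pow_le_pow_left' (h.ofReal_bw_mul_vNorm_le hσ hρ hκ hμ) n).trans
      (add_four_pow_le n _ _ _ _)
  have mA' : Measurable fun ω => A ω ^ n := mA.pow_const n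
  have mB' := (aemeasurable_lintegral volume volume cB mB).pow_const n
  have mK' := (aemeasurable_lintegral volume volume cK mK).pow_const n
  have mAB : AEMeasurable fun ω => A ω ^ n + (∫⁻ s, FB ω s) ^ n := mA'.aemeasurable.add mB'
  have mABK : AEMeasurable fun ω => A ω ^ n + (∫⁻ s, FB ω s) ^ n + (∫⁻ r, FK ω r) ^ n :=
    mAB.add mK'
  refine (lintegral_mono_ae hmain).trans ?_
  rw [lintegral_const_mul' _ _ (ENNReal.pow_ne_top (by simp)),
    lintegral_add_left' mABK, lintegral_add_left' mAB, lintegral_add_left mA']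
  have ha' : 0 ≤ 1 / a := by positivity
  calc _ ≤ 4 ^ n * (ENNReal.ofReal C + ENNReal.ofReal C * ENNReal.ofReal (1 / a) ^ n +
        ENNReal.ofReal C * ENNReal.ofReal (1 / a) ^ n +
        ENNReal.ofReal C * (ENNReal.ofReal (1 / a) * ENNReal.ofReal (1 / a)) ^ n) := by gcongr
    _ = ENNReal.ofReal
          (4 ^ n * (1 + (1 / a) ^ n + (1 / a) ^ n + (1 / a * (1 / a)) ^ n) * C) := by
        rw [ENNReal.ofReal_mul (by positivity), ENNReal.ofReal_mul (by positivity),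
          ENNReal.ofReal_add (by positivity) (by positivity),
          ENNReal.ofReal_add (by positivity) (by positivity),
          ENNReal.ofReal_add (by positivity) (by positivity),
          ENNReal.ofReal_pow (by positivity), ENNReal.ofReal_pow (by positivity),
          ENNReal.ofReal_pow (by positivity), ENNReal.ofReal_mul ha']
        simp only [ENNReal.ofReal_one, ENNReal.ofReal_ofNat]
        ring
end
end
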